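/- arXiv:1912.05118 — 4 statements merged into one kernel-verified Lean document; each statement's English description precedes it below -/
import Mathlib

section
/- Let X be a finite subset of the unit sphere S^d ⊂ ℝ^{d+1} not contained in any open hemisphere. Then for every ε with 0 < ε ≤ π/2, the spherical measure of the ε-neighbourhood of X in S^d is at least twice the spherical measure of a spherical cap of angular radius ε. -/
open Metric Set MeasureTheory RealInnerProductSpace

/-!
Cut the sphere into the Voronoi cells of the points of `X`. Since no open hemisphere contains `X`,
every point is within `π / 2` of `X`, so the cell of `x` lies in the closed hemisphere about `x`.
Both the cell and the cap of radius `ε` about `x` meet each meridian issuing from `x` in an initial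
arc, and the caps cut all meridians at the same length. Hence along every meridian one of the two
arcs contains the other, and integrating over the meridians shows that the cell and the cap are
positively correlated in the hemisphere. Summing over the cells, the caps cover at least the
proportion cap / hemisphere of the whole sphere. Measures of subsets of the sphere are computed as
Lebesgue measures of the cones over them in the unit ball.
-/

section Correlation

variable {α β : Type*} [MeasurableSpace α] [MeasurableSpace β]

lemma measure_mul_measure_le_of_subset_or_subset (μ : Measure α) {s t : Set α}
    (h : s ⊆ t ∨ t ⊆ s) : μ s * μ t ≤ μ (s ∩ t) * μ univ := by
  rcases h with h | h
  · rw [inter_eq_left.2 h]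
    gcongr
    exact subset_univ t
  · rw [inter_eq_right.2 h, mul_comm]
    gcongr
    exact subset_univ s

lemma prod_mul_prod_preimage_snd_le (σ : Measure α) (ν : Measure β) [SFinite ν]
    {s : Set (α × β)} {t : Set β} (hs : MeasurableSet s) (ht : MeasurableSet t)
    (h : ∀ a, Prod.mk a ⁻¹' s ⊆ t ∨ t ⊆ Prod.mk a ⁻¹' s) :
    σ.prod ν s * σ.prod ν (Prod.snd ⁻¹' t) ≤
      σ.prod ν (s ∩ Prod.snd ⁻¹' t) * σ.prod ν univ := by
  have hst : MeasurableSet (s ∩ Prod.snd ⁻¹' t) := hs.inter (measurable_snd ht)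
  calc σ.prod ν s * σ.prod ν (Prod.snd ⁻¹' t)
      = (∫⁻ a, ν (Prod.mk a ⁻¹' s) * ν t ∂σ) * σ univ := by
        rw [lintegral_mul_const _ (measurable_measure_prodMk_left hs), Measure.prod_apply hs,
          ← univ_prod, Measure.prod_prod, mul_comm (σ univ), mul_assoc]
    _ ≤ (∫⁻ a, ν (Prod.mk a ⁻¹' s ∩ t) * ν univ ∂σ) * σ univ := by
        gcongr ?_ * σ univ
        exact lintegral_mono fun a => measure_mul_measure_le_of_subset_or_subset ν (h a)
    _ = σ.prod ν (s ∩ Prod.snd ⁻¹' t) * σ.prod ν univ := by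
        have hfiber : ∀ a, Prod.mk a ⁻¹' s ∩ t = Prod.mk a ⁻¹' (s ∩ Prod.snd ⁻¹' t) := fun _ => rfl
        simp only [hfiber]
        rw [lintegral_mul_const _ (measurable_measure_prodMk_left hst), Measure.prod_apply hst,
          ← univ_prod_univ, Measure.prod_prod, mul_comm (σ univ), mul_assoc]

end Correlation

section PolarCoordinates

variable {F : Type*} [NormedAddCommGroup F] [NormedSpace ℝ F] [FiniteDimensional ℝ F]
  [Nontrivial F] [MeasurableSpace F] [BorelSpace F]

lemma measurePreserving_smul_sphere (μ : Measure F) [μ.IsAddHaarMeasure] :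
    MeasurePreserving (fun q : sphere (0 : F) 1 × Ioi (0 : ℝ) => (q.2 : ℝ) • (q.1 : F))
      (μ.toSphere.prod (Measure.volumeIoiPow (Module.finrank ℝ F - 1))) μ := by
  have hsymm := (μ.measurePreserving_homeomorphUnitSphereProd).symm
    (homeomorphUnitSphereProd F).toMeasurableEquiv
  have hval : MeasurePreserving (Subtype.val : ({0}ᶜ : Set F) → F) (μ.comap Subtype.val) μ := by
    have := measurePreserving_subtype_coe (μa := μ) (measurableSet_singleton (0 : F)).compl
    rwa [restrict_compl_singleton] at this
  exact hval.comp hsymm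

lemma toSphere_preimage_coe (μ : Measure F) [μ.IsAddHaarMeasure] {A : Set F}
    (hA : MeasurableSet A) (hsmul : ∀ y ∈ A, ∀ t : ℝ, 0 < t → t • y ∈ A) :
    μ.toSphere ((↑) ⁻¹' A) = Module.finrank ℝ F * μ.restrict (ball 0 1) A := by
  rw [μ.toSphere_apply' (measurable_subtype_coe hA), Measure.restrict_apply hA,
    ← measure_sdiff_null (s := A ∩ ball 0 1) (measure_singleton (0 : F))]
  congr 2
  ext y
  constructor
  · rintro ⟨t, ⟨ht0, ht1⟩, _, ⟨y, hy, rfl⟩, rfl⟩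
    change (y : F) ∈ A at hy
    refine ⟨⟨hsmul y hy t ht0, ?_⟩, ?_⟩
    · simpa [norm_smul, abs_of_pos ht0] using ht1
    · exact smul_ne_zero ht0.ne' (ne_zero_of_mem_unit_sphere y)
  · rintro ⟨⟨hyA, hy1⟩, hy0⟩
    have hpos : 0 < ‖y‖ := norm_pos_iff.2 hy0
    refine ⟨‖y‖, ⟨hpos, mem_ball_zero_iff.1 hy1⟩, ‖y‖⁻¹ • y, ?_, smul_inv_smul₀ hpos.ne' y⟩
    exact ⟨⟨‖y‖⁻¹ • y, by simp [norm_smul, hpos.ne']⟩, hsmul y hyA _ (inv_pos.2 hpos), rfl⟩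

end PolarCoordinates

section CylindricalCoordinates

variable {E : Type*} [NormedAddCommGroup E] [InnerProductSpace ℝ E]

/-- Cylindrical coordinates about the axis `ℝ x`: the point with direction `w ⟂ x`, height `h` and
distance `r > 0` from the axis is `cylindrical x (w, (h, r))`. The direction comes first, so that
fixing it leaves the half-plane of all `(h, r)`. -/
def cylindrical (x : E) (q : sphere (0 : (ℝ ∙ x)ᗮ) 1 × (ℝ × Ioi (0 : ℝ))) : E :=
  q.2.1 • x + (q.2.2 : ℝ) • ((q.1 : (ℝ ∙ x)ᗮ) : E)

lemma inner_cylindrical {x : E} (hx : ‖x‖ = 1)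
    (q : sphere (0 : (ℝ ∙ x)ᗮ) 1 × (ℝ × Ioi (0 : ℝ))) : ⟪x, cylindrical x q⟫ = q.2.1 := by
  have horth : ⟪x, ((q.1 : (ℝ ∙ x)ᗮ) : E)⟫ = 0 :=
    Submodule.mem_orthogonal_singleton_iff_inner_right.1 q.1.1.2
  simp [cylindrical, inner_add_right, inner_smul_right, horth, hx]

lemma norm_cylindrical {x : E} (hx : ‖x‖ = 1)
    (q : sphere (0 : (ℝ ∙ x)ᗮ) 1 × (ℝ × Ioi (0 : ℝ))) :
    ‖cylindrical x q‖ = √(q.2.1 ^ 2 + (q.2.2 : ℝ) ^ 2) := by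
  have horth : ⟪q.2.1 • x, (q.2.2 : ℝ) • ((q.1 : (ℝ ∙ x)ᗮ) : E)⟫ = 0 := by
    rw [real_inner_smul_left, real_inner_smul_right,
      Submodule.mem_orthogonal_singleton_iff_inner_right.1 q.1.1.2, mul_zero, mul_zero]
  have hq : ‖((q.1 : (ℝ ∙ x)ᗮ) : E)‖ = 1 := norm_eq_of_mem_sphere q.1
  rw [cylindrical, norm_add_eq_sqrt_iff_real_inner_eq_zero.2 horth, norm_smul, norm_smul, hx, hq]
  simp [← sq]

variable [FiniteDimensional ℝ E] [MeasurableSpace E] [BorelSpace E]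

lemma measurePreserving_smul_add_orthogonal {x : E} (hx : ‖x‖ = 1) :
    MeasurePreserving (fun p : ℝ × (ℝ ∙ x)ᗮ => p.1 • x + (p.2 : E)) := by
  have haxis := (LinearIsometryEquiv.toSpanUnitSingleton (𝕜 := ℝ) x hx).measurePreserving.prod
    (MeasurePreserving.id (volume : Measure (ℝ ∙ x)ᗮ))
  have hsum := (ℝ ∙ x).orthogonalDecomposition.symm.measurePreserving.comp
    (WithLp.volume_preserving_toLp (ℝ ∙ x) (ℝ ∙ x)ᗮ)
  have hcomp := hsum.comp haxis
  simpa [Function.comp_def, Measure.volume_eq_prod] using hcomp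

lemma measurePreserving_cylindrical {x : E} (hx : ‖x‖ = 1) [Nontrivial (ℝ ∙ x)ᗮ] :
    MeasurePreserving (cylindrical x)
      ((volume : Measure (ℝ ∙ x)ᗮ).toSphere.prod
        ((volume : Measure ℝ).prod (Measure.volumeIoiPow (Module.finrank ℝ (ℝ ∙ x)ᗮ - 1))))
      volume := by
  set σ := (volume : Measure (ℝ ∙ x)ᗮ).toSphere
  set ρ := Measure.volumeIoiPow (Module.finrank ℝ (ℝ ∙ x)ᗮ - 1)
  have hreorder : MeasurePreserving (fun q : sphere (0 : (ℝ ∙ x)ᗮ) 1 × (ℝ × Ioi (0 : ℝ)) =>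
      (q.2.1, (q.1, q.2.2))) (σ.prod (volume.prod ρ)) (volume.prod (σ.prod ρ)) :=
    (measurePreserving_prodAssoc volume σ ρ).comp
      ((Measure.measurePreserving_swap.prod (.id ρ)).comp
        (measurePreserving_prodAssoc σ volume ρ).symm)
  have hpolar := (MeasurePreserving.id (volume : Measure ℝ)).prod
    (measurePreserving_smul_sphere (volume : Measure (ℝ ∙ x)ᗮ))
  exact (measurePreserving_smul_add_orthogonal hx).comp (hpolar.comp hreorder)

/-- The sets `{y | (⟪x, y⟫, ‖y‖) ∈ K}` are those invariant under rotations about `x`; in cylindrical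
coordinates they do not involve the direction, so the measure remains a product. -/
lemma measurePreserving_cylindrical_restrict {x : E} (hx : ‖x‖ = 1) [Nontrivial (ℝ ∙ x)ᗮ]
    {K : Set (ℝ × ℝ)} (hK : MeasurableSet K) :
    MeasurePreserving (cylindrical x)
      ((volume : Measure (ℝ ∙ x)ᗮ).toSphere.prod
        (((volume : Measure ℝ).prod
          (Measure.volumeIoiPow (Module.finrank ℝ (ℝ ∙ x)ᗮ - 1))).restrict
            {p | (p.1, √(p.1 ^ 2 + (p.2 : ℝ) ^ 2)) ∈ K}))
      (volume.restrict {y | (⟪x, y⟫, ‖y‖) ∈ K}) := by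
  have hmeas : MeasurableSet {y : E | (⟪x, y⟫, ‖y‖) ∈ K} :=
    hK.preimage (f := fun y : E => (⟪x, y⟫, ‖y‖)) (by fun_prop)
  have := (measurePreserving_cylindrical hx).restrict_preimage hmeas
  convert this using 1
  conv_lhs => rw [← Measure.restrict_univ (μ := (volume : Measure (ℝ ∙ x)ᗮ).toSphere)]
  rw [Measure.prod_restrict]
  congr 1
  ext q
  simp [inner_cylindrical hx, norm_cylindrical hx]

end CylindricalCoordinates

section Cones

variable {E : Type*} [NormedAddCommGroup E] [InnerProductSpace ℝ E]

/-- The solid closed circular cone with axis `x` and half-opening angle `arccos c`,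
for a unit vector `x`. -/
def circularCone (x : E) (c : ℝ) : Set E :=
  {y | c * ‖y‖ ≤ ⟪x, y⟫}

/-- The cone over the spherical Voronoi cell of `x` among the unit vectors in `X`; on the sphere,
the nearest point is the one with the largest inner product. -/
def voronoiCone (X : Finset E) (x : E) : Set E :=
  {y | ∀ z ∈ X, ⟪z, y⟫ ≤ ⟪x, y⟫}

/-- A cone that meets every half-plane bounded by the axis `ℝ x` in a sector starting at the ray
through `x`; for instance any convex cone containing `x`. -/
def IsConeTowards (x : E) (A : Set E) : Prop :=
  ∀ ⦃p⦄, p ∈ A → ∀ ⦃a b : ℝ⦄, 0 < a → 0 ≤ b → a • p + b • x ∈ A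

lemma isConeTowards_circularCone {x : E} (hx : ‖x‖ = 1) {c : ℝ} (hc₀ : 0 ≤ c) (hc₁ : c ≤ 1) :
    IsConeTowards x (circularCone x c) := by
  intro p hp a b ha hb
  have hp : c * ‖p‖ ≤ ⟪x, p⟫ := hp
  calc c * ‖a • p + b • x‖
      ≤ c * (a * ‖p‖ + b) := by
        gcongr
        simpa [norm_smul, abs_of_pos ha, abs_of_nonneg hb, hx] using norm_add_le (a • p) (b • x)
    _ = a * (c * ‖p‖) + c * b := by ring
    _ ≤ a * ⟪x, p⟫ + 1 * b := by gcongr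
    _ = ⟪x, a • p + b • x⟫ := by simp [inner_add_right, inner_smul_right, hx]

lemma isConeTowards_voronoiCone {X : Finset E} (hX : ∀ z ∈ X, ‖z‖ = 1) {x : E} (hx : x ∈ X) :
    IsConeTowards x (voronoiCone X x) := by
  intro p hp a b ha hb z hz
  have hzx : ⟪z, x⟫ ≤ ⟪x, x⟫ := by
    simpa [hX z hz, hX x hx] using real_inner_le_norm z x
  simp only [inner_add_right, inner_smul_right]
  gcongr
  exact hp z hz

lemma circularCone_subset_circularCone_zero {x : E} {c : ℝ} (hc : 0 ≤ c) :
    circularCone x c ⊆ circularCone x 0 := by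
  intro y (hy : c * ‖y‖ ≤ ⟪x, y⟫)
  have : 0 ≤ c * ‖y‖ := by positivity
  simpa [circularCone] using this.trans hy

lemma circularCone_zero_subset_circularCone {x : E} (hx : ‖x‖ = 1)
    [Subsingleton (ℝ ∙ x)ᗮ] {c : ℝ} (hc : c ≤ 1) : circularCone x 0 ⊆ circularCone x c := by
  intro y hy
  have hy : 0 ≤ ⟪x, y⟫ := by simpa [circularCone] using hy
  have horth : y - ⟪x, y⟫ • x ∈ (ℝ ∙ x)ᗮ := by
    simp [Submodule.mem_orthogonal_singleton_iff_inner_right, inner_sub_right, inner_smul_right, hx]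
  have hyx : y = ⟪x, y⟫ • x :=
    sub_eq_zero.1 (congrArg Subtype.val (Subsingleton.elim (⟨_, horth⟩ : (ℝ ∙ x)ᗮ) 0))
  have hnorm : ‖y‖ = ⟪x, y⟫ := by
    rw [hyx, norm_smul, hx, mul_one, Real.norm_of_nonneg hy, ← hyx]
  exact (mul_le_of_le_one_left (norm_nonneg y) hc).trans hnorm.le

lemma smul_mem_circularCone {x y : E} {c t : ℝ} (ht : 0 < t) (hy : y ∈ circularCone x c) :
    t • y ∈ circularCone x c := by
  have hy : c * ‖y‖ ≤ ⟪x, y⟫ := hy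
  calc c * ‖t • y‖ = t * (c * ‖y‖) := by rw [norm_smul, Real.norm_of_nonneg ht.le]; ring
    _ ≤ t * ⟪x, y⟫ := by gcongr
    _ = ⟪x, t • y⟫ := (real_inner_smul_right x y t).symm

lemma smul_mem_biUnion_circularCone {s : Set E} {y : E} {c t : ℝ} (ht : 0 < t)
    (hy : y ∈ ⋃ x ∈ s, circularCone x c) : t • y ∈ ⋃ x ∈ s, circularCone x c := by
  obtain ⟨x, hx, hy⟩ := mem_iUnion₂.1 hy
  exact mem_biUnion hx (smul_mem_circularCone ht hy)

lemma iUnion_voronoiCone_inter_circularCone_zero {X : Finset E}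
    (hX : ∀ y, ∃ x ∈ X, 0 ≤ ⟪x, y⟫) : ⋃ x ∈ X, voronoiCone X x ∩ circularCone x 0 = univ := by
  refine eq_univ_of_forall fun y => ?_
  obtain ⟨z, hz, hzy⟩ := hX y
  obtain ⟨x, hx, hmax⟩ := X.exists_max_image (fun z => ⟪z, y⟫) ⟨z, hz⟩
  have hxy : y ∈ circularCone x 0 := by simpa [circularCone] using hzy.trans (hmax z hz)
  exact mem_biUnion hx ⟨hmax, hxy⟩

lemma measurableSet_circularCone [MeasurableSpace E] [OpensMeasurableSpace E] (x : E) (c : ℝ) :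
    MeasurableSet (circularCone x c) :=
  (isClosed_le (by fun_prop) (by fun_prop)).measurableSet

lemma measurableSet_voronoiCone [MeasurableSpace E] [OpensMeasurableSpace E] (X : Finset E)
    (x : E) : MeasurableSet (voronoiCone X x) := by
  have : voronoiCone X x = ⋂ z ∈ X, {y | ⟪z, y⟫ ≤ ⟪x, y⟫} := by
    ext
    simp [voronoiCone]
  rw [this]
  exact X.measurableSet_biInter fun z _ =>
    (isClosed_le (by fun_prop) (by fun_prop)).measurableSet

lemma cylindrical_mem_of_mul_le_mul {x : E} {A : Set E} (hA : IsConeTowards x A)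
    {w : sphere (0 : (ℝ ∙ x)ᗮ) 1} {p p' : ℝ × Ioi (0 : ℝ)} (hp : cylindrical x (w, p) ∈ A)
    (h : p.1 * p'.2 ≤ p'.1 * p.2) : cylindrical x (w, p') ∈ A := by
  have hr : (0 : ℝ) < p.2 := p.2.2
  have hr' : (0 : ℝ) < p'.2 := p'.2.2
  have hb : 0 ≤ p'.1 - p'.2 / p.2 * p.1 := by
    rw [sub_nonneg, div_mul_eq_mul_div, div_le_iff₀ hr, mul_comm]
    exact h
  -- `p.1 / p.2` is the cotangent of the angle from the axis, so `p'` lies between `p` and `x`.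
  convert hA hp (div_pos hr' hr) hb using 1
  simp only [cylindrical, smul_add, smul_smul, sub_smul, div_mul_cancel₀ _ hr.ne']
  abel

lemma cylindrical_preimage_subset_or_subset {x : E} {A B : Set E} (hA : IsConeTowards x A)
    (hB : IsConeTowards x B) (w : sphere (0 : (ℝ ∙ x)ᗮ) 1) :
    (fun p => cylindrical x (w, p)) ⁻¹' A ⊆ (fun p => cylindrical x (w, p)) ⁻¹' B ∨
      (fun p => cylindrical x (w, p)) ⁻¹' B ⊆ (fun p => cylindrical x (w, p)) ⁻¹' A := by
  by_contra! h
  obtain ⟨p, hpA, hpB⟩ := not_subset.1 h.1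
  obtain ⟨p', hpB', hpA'⟩ := not_subset.1 h.2
  rcases le_total (p.1 * p'.2) (p'.1 * p.2) with hle | hle
  · exact hpA' (cylindrical_mem_of_mul_le_mul hA hpA hle)
  · exact hpB (cylindrical_mem_of_mul_le_mul hB hpB' hle)

end Cones

section AxialCorrelation

variable {E : Type*} [NormedAddCommGroup E] [InnerProductSpace ℝ E] [FiniteDimensional ℝ E]
  [MeasurableSpace E] [BorelSpace E]

lemma restrict_mul_restrict_le_of_isConeTowards {x : E} (hx : ‖x‖ = 1) [Nontrivial (ℝ ∙ x)ᗮ]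
    {A : Set E} (hAm : MeasurableSet A) (hA : IsConeTowards x A) {K L : Set (ℝ × ℝ)}
    (hK : MeasurableSet K) (hLm : MeasurableSet L)
    (hL : IsConeTowards x {y | (⟪x, y⟫, ‖y‖) ∈ L}) :
    volume.restrict {y | (⟪x, y⟫, ‖y‖) ∈ K} A *
        volume.restrict {y | (⟪x, y⟫, ‖y‖) ∈ K} {y | (⟪x, y⟫, ‖y‖) ∈ L} ≤
      volume.restrict {y | (⟪x, y⟫, ‖y‖) ∈ K} (A ∩ {y | (⟪x, y⟫, ‖y‖) ∈ L}) *
        volume.restrict {y | (⟪x, y⟫, ‖y‖) ∈ K} univ := by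
  have hpres := measurePreserving_cylindrical_restrict hx hK
  have hBm : MeasurableSet {y : E | (⟪x, y⟫, ‖y‖) ∈ L} :=
    hLm.preimage (f := fun y : E => (⟪x, y⟫, ‖y‖)) (by fun_prop)
  set B : Set E := {y | (⟪x, y⟫, ‖y‖) ∈ L}
  set L' : Set (ℝ × Ioi (0 : ℝ)) := {p | (p.1, √(p.1 ^ 2 + (p.2 : ℝ) ^ 2)) ∈ L}
  have hL'm : MeasurableSet L' :=
    hLm.preimage (f := fun p : ℝ × Ioi (0 : ℝ) => (p.1, √(p.1 ^ 2 + (p.2 : ℝ) ^ 2)))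
      (by fun_prop)
  have hBL' : cylindrical x ⁻¹' B = Prod.snd ⁻¹' L' := by
    ext q
    simp [B, L', inner_cylindrical hx, norm_cylindrical hx]
  have hfiber (w : sphere (0 : (ℝ ∙ x)ᗮ) 1) : (fun p => cylindrical x (w, p)) ⁻¹' B = L' :=
    congrArg (Prod.mk w ⁻¹' ·) hBL'
  rw [← hpres.measure_preimage hAm.nullMeasurableSet,
    ← hpres.measure_preimage hBm.nullMeasurableSet,
    ← hpres.measure_preimage (hAm.inter hBm).nullMeasurableSet,
    ← hpres.measure_preimage nullMeasurableSet_univ, preimage_inter, hBL', preimage_univ]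
  refine prod_mul_prod_preimage_snd_le _ _ (hpres.measurable hAm) hL'm fun w => ?_
  rw [← hfiber w]
  exact cylindrical_preimage_subset_or_subset hA hL w

end AxialCorrelation

section SolidAngle

variable {E : Type*} [NormedAddCommGroup E] [InnerProductSpace ℝ E] [FiniteDimensional ℝ E]
  [MeasurableSpace E] [BorelSpace E]

variable (E) in
/-- Lebesgue measure on the unit ball. On a cone it is the spherical measure of the base divided by
the dimension, see `toSphere_preimage_coe`, so it serves as the solid angle. -/
noncomputable def solidAngle : Measure E :=
  volume.restrict (ball 0 1)

instance : IsFiniteMeasure (solidAngle E) :=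
  isFiniteMeasure_restrict.2 measure_ball_lt_top.ne

lemma solidAngle_univ_ne_zero : solidAngle E univ ≠ 0 := by
  rw [solidAngle, Measure.restrict_apply_univ]
  exact (measure_ball_pos volume 0 one_pos).ne'

lemma measurePreserving_solidAngle (f : E ≃ₗᵢ[ℝ] E) :
    MeasurePreserving f (solidAngle E) (solidAngle E) := by
  have := f.measurePreserving.restrict_preimage (measurableSet_ball (x := (0 : E)) (ε := 1))
  rwa [f.preimage_ball, map_zero] at this

lemma solidAngle_circularCone_eq {x u : E} (h : ‖x‖ = ‖u‖) (c : ℝ) :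
    solidAngle E (circularCone x c) = solidAngle E (circularCone u c) := by
  set f := (ℝ ∙ (x - u))ᗮ.reflection
  have hfx : f x = u := Submodule.reflection_sub h
  have hpre : f ⁻¹' circularCone u c = circularCone x c := by
    ext y
    simp only [circularCone, mem_preimage, mem_ofPred_eq, f.norm_map, ← hfx, f.inner_map_map]
  rw [← hpre, (measurePreserving_solidAngle f).measure_preimage
    (measurableSet_circularCone u c).nullMeasurableSet]

lemma solidAngle_setOf_inner_eq_zero {x : E} (hx : x ≠ 0) :
    solidAngle E {y | ⟪x, y⟫ = 0} = 0 := by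
  have hcoe : {y | ⟪x, y⟫ = 0} = ((ℝ ∙ x)ᗮ : Set E) := by
    ext
    exact Submodule.mem_orthogonal_singleton_iff_inner_right.symm
  have hne : (ℝ ∙ x)ᗮ ≠ ⊤ := by simpa [Submodule.orthogonal_eq_top_iff] using hx
  rw [hcoe]
  exact Measure.restrict_le_self.absolutelyContinuous (Measure.addHaar_submodule volume _ hne)

lemma two_mul_solidAngle_circularCone_zero {x : E} (hx : x ≠ 0) :
    2 * solidAngle E (circularCone x 0) = solidAngle E univ := by
  have hdisj : AEDisjoint (solidAngle E) (circularCone x 0) (circularCone (-x) 0) := by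
    refine measure_mono_null ?_ (solidAngle_setOf_inner_eq_zero hx)
    rintro y ⟨hy, hy'⟩
    simp only [circularCone, zero_mul, inner_neg_left, mem_ofPred_eq] at hy hy' ⊢
    linarith
  have hunion : circularCone x 0 ∪ circularCone (-x) 0 = univ := by
    ext y
    simpa [circularCone] using le_total 0 ⟪x, y⟫
  rw [← hunion, measure_union₀ (measurableSet_circularCone (-x) 0).nullMeasurableSet hdisj,
    solidAngle_circularCone_eq (norm_neg x), two_mul]

lemma aedisjoint_voronoiCone {X : Finset E} {x z : E} (hx : x ∈ X) (hz : z ∈ X) (hxz : x ≠ z) :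
    AEDisjoint (solidAngle E) (voronoiCone X x) (voronoiCone X z) := by
  refine measure_mono_null ?_ (solidAngle_setOf_inner_eq_zero (sub_ne_zero.2 hxz))
  rintro y ⟨hyx, hyz⟩
  exact (inner_sub_left x z y).trans (sub_eq_zero.2 (le_antisymm (hyz x hx) (hyx z hz)))

lemma solidAngle_mul_solidAngle_circularCone_le {x : E} (hx : ‖x‖ = 1) {A : Set E}
    (hAm : MeasurableSet A) (hA : IsConeTowards x A) {c : ℝ} (hc₀ : 0 ≤ c) (hc₁ : c ≤ 1) :
    solidAngle E (A ∩ circularCone x 0) * solidAngle E (circularCone x c) ≤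
      solidAngle E (A ∩ circularCone x c) * solidAngle E (circularCone x 0) := by
  have hsub : circularCone x c ⊆ circularCone x 0 := circularCone_subset_circularCone_zero hc₀
  rcases subsingleton_or_nontrivial (ℝ ∙ x)ᗮ with hdim | hdim
  · rw [hsub.antisymm (circularCone_zero_subset_circularCone hx hc₁)]
  have hcm := measurableSet_circularCone x c
  have hK : MeasurableSet {k : ℝ × ℝ | k.2 < 1 ∧ 0 ≤ k.1} :=
    (measurableSet_lt measurable_snd measurable_const).inter
      (measurableSet_le measurable_const measurable_fst)
  have hL : MeasurableSet {k : ℝ × ℝ | c * k.2 ≤ k.1} :=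
    measurableSet_le (by fun_prop) (by fun_prop)
  have hcorr := restrict_mul_restrict_le_of_isConeTowards hx hAm hA hK hL
    (isConeTowards_circularCone hx hc₀ hc₁)
  have hhalf : volume.restrict {y : E | (⟪x, y⟫, ‖y‖) ∈ {k : ℝ × ℝ | k.2 < 1 ∧ 0 ≤ k.1}} =
      (solidAngle E).restrict (circularCone x 0) := by
    rw [solidAngle, Measure.restrict_restrict (measurableSet_circularCone x 0)]
    congr 1
    ext y
    simp [circularCone, and_comm]
  rw [hhalf] at hcorr
  change (solidAngle E).restrict _ A * (solidAngle E).restrict _ (circularCone x c) ≤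
    (solidAngle E).restrict _ (A ∩ circularCone x c) * _ at hcorr
  rwa [Measure.restrict_apply hAm, Measure.restrict_apply hcm, Measure.restrict_apply_univ,
    Measure.restrict_apply (hAm.inter hcm), inter_assoc, inter_eq_left.2 hsub] at hcorr

theorem two_mul_solidAngle_circularCone_le {X : Finset E} (hX : ∀ x ∈ X, ‖x‖ = 1)
    (hcover : ∀ y, ∃ x ∈ X, 0 ≤ ⟪x, y⟫) {u : E} (hu : ‖u‖ = 1) {c : ℝ} (hc₀ : 0 ≤ c)
    (hc₁ : c ≤ 1) :
    2 * solidAngle E (circularCone u c) ≤ solidAngle E (⋃ x ∈ X, circularCone x c) := by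
  set half := solidAngle E (circularCone u 0)
  have hhalf : 2 * half = solidAngle E univ :=
    two_mul_solidAngle_circularCone_zero (norm_ne_zero_iff.1 (by simp [hu]))
  have hhalf₀ : half ≠ 0 := right_ne_zero_of_mul (hhalf ▸ solidAngle_univ_ne_zero)
  refine (ENNReal.mul_le_mul_iff_left hhalf₀ (measure_ne_top _ _)).1 ?_
  calc 2 * solidAngle E (circularCone u c) * half
      = solidAngle E (⋃ x ∈ X, voronoiCone X x ∩ circularCone x 0) *
          solidAngle E (circularCone u c) := by
        rw [iUnion_voronoiCone_inter_circularCone_zero hcover, ← hhalf, mul_right_comm]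
    _ ≤ (∑ x ∈ X, solidAngle E (voronoiCone X x ∩ circularCone x 0)) *
          solidAngle E (circularCone u c) := by
        gcongr
        exact measure_biUnion_finset_le X _
    _ ≤ (∑ x ∈ X, solidAngle E (voronoiCone X x ∩ circularCone x c)) * half := by
        rw [Finset.sum_mul, Finset.sum_mul]
        refine Finset.sum_le_sum fun x hx => ?_
        have hxu : ‖u‖ = ‖x‖ := hu.trans (hX x hx).symm
        simp only [half, solidAngle_circularCone_eq hxu]
        exact solidAngle_mul_solidAngle_circularCone_le (hX x hx) (measurableSet_voronoiCone X x)
          (isConeTowards_voronoiCone hX hx) hc₀ hc₁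
    _ = solidAngle E (⋃ x ∈ X, voronoiCone X x ∩ circularCone x c) * half := by
        rw [measure_biUnion_finset₀]
        · exact fun x hx z hz hxz =>
            (aedisjoint_voronoiCone hx hz hxz).mono inter_subset_left inter_subset_left
        · exact fun x _ => ((measurableSet_voronoiCone X x).inter
            (measurableSet_circularCone x c)).nullMeasurableSet
    _ ≤ solidAngle E (⋃ x ∈ X, circularCone x c) * half := by
        gcongr
        exact inter_subset_right

end SolidAngle

section Sphere

variable {E : Type*} [NormedAddCommGroup E] [InnerProductSpace ℝ E]

lemma arccos_inner_le_iff_mem_circularCone (x y : sphere (0 : E) 1) {ε : ℝ} (hε₀ : 0 ≤ ε)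
    (hε : ε ≤ Real.pi) :
    Real.arccos ⟪(x : E), (y : E)⟫ ≤ ε ↔ (y : E) ∈ circularCone (x : E) (Real.cos ε) := by
  have habs := abs_real_inner_le_norm (x : E) y
  rw [norm_eq_of_mem_sphere, norm_eq_of_mem_sphere, one_mul, abs_le] at habs
  rw [← Real.strictAntiOn_cos.le_iff_ge ⟨hε₀, hε⟩ ⟨Real.arccos_nonneg _, Real.arccos_le_pi _⟩,
    Real.cos_arccos habs.1 habs.2]
  simp [circularCone]

lemma exists_mem_inner_nonneg {X : Set (sphere (0 : E) 1)}
    (hX : ¬∃ u : sphere (0 : E) 1, ∀ x ∈ X, 0 < ⟪(u : E), (x : E)⟫) (u : sphere (0 : E) 1)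
    (y : E) : ∃ x ∈ X, 0 ≤ ⟪(x : E), y⟫ := by
  by_contra! hneg
  rcases eq_or_ne y 0 with rfl | hy
  · exact hX ⟨u, fun x hx => absurd (hneg x hx) (by simp)⟩
  · have hnorm : 0 < ‖y‖ := norm_pos_iff.2 hy
    refine hX ⟨⟨-(‖y‖⁻¹ • y), by simp [norm_smul, hnorm.ne']⟩, fun x hx => ?_⟩
    rw [inner_neg_left, real_inner_smul_left, real_inner_comm, neg_pos]
    exact mul_neg_of_pos_of_neg (inv_pos.2 hnorm) (hneg x hx)

variable [FiniteDimensional ℝ E] [MeasurableSpace E] [BorelSpace E]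

theorem measure_eps_nbhd_ge_two_caps_general {X : Set (sphere (0 : E) 1)} (hXfin : X.Finite)
    (hhemi : ¬∃ u : sphere (0 : E) 1, ∀ x ∈ X, 0 < ⟪(u : E), (x : E)⟫) {ε : ℝ} (hε₀ : 0 ≤ ε)
    (hε : ε ≤ Real.pi / 2) (u : sphere (0 : E) 1) :
    2 * (volume : Measure E).toSphere
        {y : sphere (0 : E) 1 | Real.arccos ⟪(u : E), (y : E)⟫ ≤ ε} ≤
      (volume : Measure E).toSphere
        {y : sphere (0 : E) 1 | ∃ x ∈ X, Real.arccos ⟪(x : E), (y : E)⟫ ≤ ε} := by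
  have : Nontrivial E := ⟨u, 0, ne_zero_of_mem_unit_sphere u⟩
  set c := Real.cos ε
  set Y : Finset E := hXfin.toFinset.map (.subtype _)
  have hcone := arccos_inner_le_iff_mem_circularCone (E := E) (ε := ε) (hε₀ := hε₀)
    (hε := hε.trans (by linarith [Real.pi_pos]))
  have hcap : {y : sphere (0 : E) 1 | Real.arccos ⟪(u : E), (y : E)⟫ ≤ ε} =
      (↑) ⁻¹' circularCone (u : E) c := ext (hcone u)
  have hnbhd : {y : sphere (0 : E) 1 | ∃ x ∈ X, Real.arccos ⟪(x : E), (y : E)⟫ ≤ ε} =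
      (↑) ⁻¹' ⋃ x ∈ Y, circularCone x c := by
    ext y
    simp [Y, hcone, c]
  rw [hcap, hnbhd, toSphere_preimage_coe volume (measurableSet_circularCone (u : E) c)
      fun _ hy _ ht => smul_mem_circularCone ht hy,
    toSphere_preimage_coe volume (Y.measurableSet_biUnion fun x _ => measurableSet_circularCone x c)
      fun _ hy _ ht => smul_mem_biUnion_circularCone ht hy, mul_left_comm]
  gcongr
  refine two_mul_solidAngle_circularCone_le ?_ ?_ (norm_eq_of_mem_sphere u)
    (Real.cos_nonneg_of_neg_pi_div_two_le_of_le (by linarith) hε) (Real.cos_le_one ε)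
  · simp +contextual [Y]
  · simpa [Y] using exists_mem_inner_nonneg hhemi u

end Sphere

/-- If a finite set X on the unit sphere S^d ⊂ ℝ^{d+1} does not lie in an open
hemisphere, then for 0 < ε ≤ π/2 the spherical measure of its ε-neighbourhood is
at least twice the measure of a spherical cap of angular radius ε. -/
theorem measure_eps_nbhd_ge_two_caps (d : ℕ)
    (X : Set (sphere (0 : EuclideanSpace ℝ (Fin (d + 1))) 1))
    (hXfin : X.Finite) (hXne : X.Nonempty)
    (hhemi : ¬∃ u : sphere (0 : EuclideanSpace ℝ (Fin (d + 1))) 1,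
      ∀ x ∈ X, 0 < ⟪(u : EuclideanSpace ℝ (Fin (d + 1))), (x : EuclideanSpace ℝ (Fin (d + 1)))⟫)
    (ε : ℝ) (hε : 0 < ε) (hε' : ε ≤ Real.pi / 2)
    (u : sphere (0 : EuclideanSpace ℝ (Fin (d + 1))) 1) :
    2 * (volume : Measure (EuclideanSpace ℝ (Fin (d + 1)))).toSphere
        {y : sphere (0 : EuclideanSpace ℝ (Fin (d + 1))) 1 |
          Real.arccos ⟪(u : EuclideanSpace ℝ (Fin (d + 1))), (y : EuclideanSpace ℝ (Fin (d + 1)))⟫ ≤ ε}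
      ≤ (volume : Measure (EuclideanSpace ℝ (Fin (d + 1)))).toSphere
        {y : sphere (0 : EuclideanSpace ℝ (Fin (d + 1))) 1 | ∃ x ∈ X,
          Real.arccos ⟪(x : EuclideanSpace ℝ (Fin (d + 1))), (y : EuclideanSpace ℝ (Fin (d + 1)))⟫ ≤ ε} :=
  measure_eps_nbhd_ge_two_caps_general hXfin hhemi hε.le hε' u
end

section
/- Among r-ball bodies in ℝ^d of given inradius, the r-lense has maximal volume; equivalently, among r-ball bodies of given volume, the r-lense has the smallest inradius: if K is an r-ball body with inradius ρ ≤ r, then Vol_d(K) ≤ Vol_d(L_{r,ρ,d}). -/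
open Metric Set MeasureTheory Pointwise RealInnerProductSpace

variable {d : ℕ}

/-- The `r`-ball body generated by `X`: the intersection of all closed balls of
radius `r` centered at points of `X`. -/
def ballBody (r : ℝ) (X : Set (EuclideanSpace ℝ (Fin d))) :
    Set (EuclideanSpace ℝ (Fin d)) :=
  ⋂ x ∈ X, closedBall x r

/-- The `r`-ball convex hull of `X`: the intersection of all closed balls of
radius `r` containing `X`. -/
def ballHull (r : ℝ) (X : Set (EuclideanSpace ℝ (Fin d))) :
    Set (EuclideanSpace ℝ (Fin d)) :=
  ⋂ y ∈ {y : EuclideanSpace ℝ (Fin d) | X ⊆ closedBall y r}, closedBall y r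

/-! Since `ρ` is maximal, the centre `o` of the inball of `K = ⋂ x ∈ X, closedBall x r` is also the
centre of the smallest ball containing `X`, whose radius is `r - ρ`. Hence, taking `o = 0`, the
origin lies in the convex hull of finitely many points of `X` of norm `r - ρ`. Let the cell of such
a point `x` consist of the directions `u` for which `⟪u, x⟫` is smallest. In this cell `⟪u, x⟫ ≤ 0`,
and `K` is contained in the ball about `x`, which agrees there with the lense centred at `x` and
`-x`. Each cell is a convex cone around `-x`, so in every half-plane bounded by the axis `ℝ ∙ x` it
is a sector next to the axis. The radial function of the lense increases away from the axis, while
that of a centred ball is constant; hence the cell contains at most as large a share of the lense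
as of the ball. The shares of the ball add up to one. -/

section Convex

variable {F : Type*} [NormedAddCommGroup F] [NormedSpace ℝ F] [FiniteDimensional ℝ F]

theorem convexHull_eq_iUnion_image_stdSimplex (s : Set F) :
    convexHull ℝ s = ⋃ k ∈ Finset.range (Module.finrank ℝ F + 2),
      (fun q : (Fin k → ℝ) × (Fin k → F) ↦ ∑ i, q.1 i • q.2 i) ''
        (stdSimplex ℝ (Fin k) ×ˢ univ.pi fun _ ↦ s) := by
  refine Subset.antisymm (fun x hx ↦ ?_) (iUnion₂_subset fun k _ ↦ ?_)
  · obtain ⟨ι, _, z, w, hzs, hz, hw, hw1, rfl⟩ := eq_pos_convex_span_of_mem_convexHull hx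
    have hcard : Fintype.card ι ≤ Module.finrank ℝ F + 1 :=
      hz.card_le_finrank_succ.trans (Nat.succ_le_succ (Submodule.finrank_le _))
    let e := (Fintype.equivFin ι).symm
    exact mem_iUnion₂.2 ⟨Fintype.card ι, Finset.mem_range.2 (by lia), (w ∘ e, z ∘ e),
      ⟨⟨fun i ↦ (hw _).le, (e.sum_comp w).trans hw1⟩, fun i _ ↦ hzs ⟨_, rfl⟩⟩,
      e.sum_comp fun i ↦ w i • z i⟩
  · rintro _ ⟨q, ⟨⟨hq, hq1⟩, hqs⟩, rfl⟩
    exact (convex_convexHull ℝ s).sum_mem (fun i _ ↦ hq i) hq1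
      fun i _ ↦ subset_convexHull ℝ s (hqs i trivial)

theorem isCompact_convexHull_of_isCompact {s : Set F} (hs : IsCompact s) :
    IsCompact (convexHull ℝ s) := by
  rw [convexHull_eq_iUnion_image_stdSimplex]
  exact Finset.isCompact_biUnion _ fun k _ ↦
    ((isCompact_stdSimplex ℝ (Fin k)).prod (isCompact_univ_pi fun _ ↦ hs)).image (by fun_prop)

end Convex

section Measure

theorem measure_inter_mul_le_of_crossing {α : Type*} [MeasurableSpace α] {μ : Measure α}
    {P Q W : Set α} (hW : MeasurableSet W) (hPQ : ∀ᵐ p ∂μ, p ∈ W → p ∈ P → p ∈ Q)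
    (hQP : ∀ᵐ p ∂μ, p ∉ W → p ∈ Q → p ∈ P) :
    μ (P ∩ W) * μ Q ≤ μ (Q ∩ W) * μ P := by
  have hin : μ (P ∩ W) ≤ μ (Q ∩ W) :=
    measure_mono_ae (hPQ.mono fun p hp hpPW ↦ ⟨hp hpPW.2 hpPW.1, hpPW.2⟩)
  have hout : μ (Q \ W) ≤ μ (P \ W) :=
    measure_mono_ae (hQP.mono fun p hp hpQW ↦ ⟨hp hpQW.2 hpQW.1, hpQW.2⟩)
  calc μ (P ∩ W) * μ Q = μ (P ∩ W) * μ (Q ∩ W) + μ (P ∩ W) * μ (Q \ W) := by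
        rw [← mul_add, measure_inter_add_sdiff Q hW]
    _ ≤ μ (Q ∩ W) * μ (P ∩ W) + μ (Q ∩ W) * μ (P \ W) := by
        rw [mul_comm (μ (P ∩ W)) (μ (Q ∩ W))]
        gcongr
    _ = μ (Q ∩ W) * μ P := by rw [← mul_add, measure_inter_add_sdiff P hW]

variable {V : Type*} [NormedAddCommGroup V] [InnerProductSpace ℝ V] [FiniteDimensional ℝ V]
  [MeasurableSpace V] [BorelSpace V]

theorem ae_inner_ne_zero {z : V} (hz : z ≠ 0) : ∀ᵐ u : V, ⟪u, z⟫ ≠ 0 := by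
  have hne : (ℝ ∙ z)ᗮ ≠ ⊤ := by simpa [Submodule.orthogonal_eq_top_iff] using hz
  have hnull := Measure.addHaar_submodule volume _ hne
  filter_upwards [measure_eq_zero_iff_ae_notMem.1 hnull] with u hu
  rwa [SetLike.mem_coe, Submodule.mem_orthogonal_singleton_iff_inner_left] at hu

theorem two_mul_volume_inter_halfSpace {S : Set V} (hneg : -S = S) {z : V} (hz : z ≠ 0) :
    2 * volume (S ∩ {u | 0 ≤ ⟪u, z⟫}) = volume S := by
  have hH : MeasurableSet {u : V | 0 ≤ ⟪u, z⟫} := measurableSet_le (by fun_prop) (by fun_prop)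
  have hflip : (S ∩ {u | 0 ≤ ⟪u, z⟫} : Set V) =ᵐ[volume] -(S \ {u | 0 ≤ ⟪u, z⟫}) := by
    filter_upwards [ae_inner_ne_zero hz] with u hu
    have hSu : u ∈ S ↔ -u ∈ S := by rw [← mem_neg, hneg]
    change (u ∈ S ∧ 0 ≤ ⟪u, z⟫) = (-u ∈ S ∧ ¬ 0 ≤ ⟪-u, z⟫)
    rw [hSu, inner_neg_left, Left.nonneg_neg_iff, not_le, hu.symm.le_iff_lt]
  rw [two_mul]
  nth_rewrite 2 [measure_congr hflip]
  rw [Measure.measure_neg, measure_inter_add_sdiff S hH]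

end Measure

section Polar

/-- The measure `t ^ k dt` on the half-line `t > 0`, which is the radial part of Lebesgue measure in
polar coordinates in dimension `k + 1`. -/
noncomputable def radialMeasure (k : ℕ) : Measure ℝ :=
  (volume.withDensity fun t ↦ ENNReal.ofReal (t ^ k)).restrict (Ioi 0)

instance (k : ℕ) : IsLocallyFiniteMeasure (radialMeasure k) :=
  have := IsLocallyFiniteMeasure.withDensity_ofReal (μ := volume) (continuous_pow (M := ℝ) k)
  inferInstanceAs (IsLocallyFiniteMeasure (Measure.restrict _ _))

theorem ae_radialMeasure_pos (k : ℕ) : ∀ᵐ t ∂radialMeasure k, 0 < t :=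
  ae_restrict_mem measurableSet_Ioi

theorem lintegral_radialMeasure (k : ℕ) {f : ℝ → ENNReal} (hf : Measurable f) :
    ∫⁻ t, f t ∂radialMeasure k = ∫⁻ t in Ioi 0, ENNReal.ofReal (t ^ k) * f t := by
  rw [radialMeasure, restrict_withDensity measurableSet_Ioi,
    lintegral_withDensity_eq_lintegral_mul _ (by fun_prop) hf]
  rfl

theorem radialMeasure_preimage_mul (k : ℕ) {κ : ℝ} (hκ : 0 < κ) {s : Set ℝ}
    (hs : MeasurableSet s) :
    radialMeasure k ((κ * ·) ⁻¹' s) = ENNReal.ofReal ((κ ^ (k + 1))⁻¹) * radialMeasure k s := by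
  let f : ℝ → ENNReal := (Ioi 0 ∩ s).indicator fun t ↦ ENNReal.ofReal (t ^ k)
  have hf : Measurable f :=
    Measurable.indicator (by fun_prop) (measurableSet_Ioi.inter hs)
  have apply_eq (u : Set ℝ) (hu : MeasurableSet u) :
      radialMeasure k u = ∫⁻ t, (Ioi 0 ∩ u).indicator (fun t ↦ ENNReal.ofReal (t ^ k)) t := by
    rw [radialMeasure, Measure.restrict_apply hu, inter_comm,
      withDensity_apply _ (measurableSet_Ioi.inter hu),
      lintegral_indicator (measurableSet_Ioi.inter hu)]
  have hfκ (t : ℝ) : (Ioi 0 ∩ (κ * ·) ⁻¹' s).indicator (fun t ↦ ENNReal.ofReal (t ^ k)) t =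
      ENNReal.ofReal ((κ ^ k)⁻¹) * f (κ • t) := by
    have hmem : κ • t ∈ Ioi 0 ∩ s ↔ t ∈ Ioi 0 ∩ (κ * ·) ⁻¹' s := by simp [hκ]
    by_cases ht : t ∈ Ioi 0 ∩ (κ * ·) ⁻¹' s
    · simp only [f, indicator_of_mem ht, indicator_of_mem (hmem.2 ht)]
      rw [← ENNReal.ofReal_mul (by positivity), smul_eq_mul, mul_pow,
        inv_mul_cancel_left₀ (by positivity)]
    · simp only [f, indicator_of_notMem ht, indicator_of_notMem (mt hmem.1 ht), mul_zero]
  rw [apply_eq _ (hs.preimage (measurable_const_mul κ)), apply_eq s hs, lintegral_congr hfκ,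
    lintegral_const_mul _ (by fun_prop), ← lintegral_map hf (by fun_prop),
    Measure.map_addHaar_smul _ hκ.ne', lintegral_smul_measure, smul_eq_mul, ← mul_assoc,
    ← ENNReal.ofReal_mul (by positivity), Module.finrank_self, pow_one, abs_of_pos (by positivity),
    ← mul_inv, ← pow_succ]

theorem lintegral_eq_lintegral_toSphere {F : Type*} [NormedAddCommGroup F] [NormedSpace ℝ F]
    [FiniteDimensional ℝ F] [Nontrivial F] [MeasurableSpace F] [BorelSpace F] (μ : Measure F)
    [μ.IsAddHaarMeasure] {f : F → ENNReal} (hf : Measurable f) :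
    ∫⁻ y, f y ∂μ = ∫⁻ v : sphere (0 : F) 1,
      ∫⁻ t, f (t • (v : F)) ∂radialMeasure (Module.finrank ℝ F - 1) ∂μ.toSphere := by
  have hpolar := μ.measurePreserving_homeomorphUnitSphereProd
  have hg : Measurable fun q : sphere (0 : F) 1 × Ioi (0 : ℝ) ↦ f ((q.2 : ℝ) • (q.1 : F)) := by
    fun_prop
  calc ∫⁻ y, f y ∂μ = ∫⁻ y : ({0}ᶜ : Set F), f y ∂μ.comap Subtype.val := by
        rw [lintegral_subtype_comap (measurableSet_singleton _).compl, restrict_compl_singleton]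
    _ = ∫⁻ y : ({0}ᶜ : Set F), (fun q : sphere (0 : F) 1 × Ioi (0 : ℝ) ↦ f ((q.2 : ℝ) • (q.1 : F)))
          (homeomorphUnitSphereProd F y) ∂μ.comap Subtype.val := by
        refine lintegral_congr fun y ↦ ?_
        have hy : ‖(y : F)‖ ≠ 0 := norm_ne_zero_iff.2 y.2
        simp [smul_smul, hy]
    _ = _ := by
        rw [hpolar.lintegral_comp hg, lintegral_prod _ hg.aemeasurable]
        refine lintegral_congr fun v ↦ ?_
        rw [Measure.volumeIoiPow, lintegral_radialMeasure _ (by fun_prop),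
          lintegral_withDensity_eq_lintegral_mul _ (by fun_prop) (by fun_prop)]
        exact lintegral_subtype_comap measurableSet_Ioi
          fun t : ℝ ↦ ENNReal.ofReal (t ^ (Module.finrank ℝ F - 1)) * f (t • (v : F))

end Polar

section Meridian

/-- Lebesgue measure in the meridian half-plane `{(h, t) | t > 0}` of a system of cylindrical
coordinates, weighted by the factor `t ^ k` coming from the rotation about the axis `t = 0`. -/
noncomputable def meridianMeasure (k : ℕ) : Measure (ℝ × ℝ) := volume.prod (radialMeasure k)

instance (k : ℕ) : IsLocallyFiniteMeasure (meridianMeasure k) :=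
  inferInstanceAs (IsLocallyFiniteMeasure (Measure.prod _ _))

theorem ae_meridianMeasure_pos (k : ℕ) : ∀ᵐ p ∂meridianMeasure k, 0 < p.2 :=
  Measure.quasiMeasurePreserving_snd.ae (ae_radialMeasure_pos k)

theorem meridianMeasure_preimage_smul (k : ℕ) {κ : ℝ} (hκ : 0 < κ) {S : Set (ℝ × ℝ)}
    (hS : MeasurableSet S) :
    meridianMeasure k ((κ • ·) ⁻¹' S) =
      ENNReal.ofReal ((κ ^ (k + 2))⁻¹) * meridianMeasure k S := by
  let m : ℝ → ENNReal := fun h ↦ radialMeasure k (Prod.mk h ⁻¹' S)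
  have hm : Measurable m := measurable_measure_prodMk_left hS
  have hslice (h : ℝ) : radialMeasure k (Prod.mk h ⁻¹' ((κ • ·) ⁻¹' S)) =
      ENNReal.ofReal ((κ ^ (k + 1))⁻¹) * m (κ • h) :=
    radialMeasure_preimage_mul k hκ (s := Prod.mk (κ • h) ⁻¹' S) (measurable_prodMk_left hS)
  rw [meridianMeasure, Measure.prod_apply hS, Measure.prod_apply (hS.preimage (by fun_prop)),
    lintegral_congr hslice, lintegral_const_mul _ (by fun_prop),
    ← lintegral_map hm (by fun_prop), Measure.map_addHaar_smul _ hκ.ne',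
    lintegral_smul_measure, smul_eq_mul, ← mul_assoc, ← ENNReal.ofReal_mul (by positivity),
    Module.finrank_self, pow_one, abs_of_pos (by positivity), ← mul_inv, ← pow_succ]

end Meridian

section Cone

/-- `W` is a cone, possibly without its apex, that is invariant under translation in the direction
`e`. In every half-plane bounded by the line `ℝ ∙ e` such a set is a sector adjacent to the ray
through `e`, which is what makes the comparison of a lense with a ball possible. -/
structure IsConeAbout {M : Type*} [AddCommGroup M] [Module ℝ M] (e : M) (W : Set M) : Prop where
  smul_mem : ∀ ⦃p⦄, p ∈ W → ∀ ⦃l : ℝ⦄, 0 < l → l • p ∈ W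
  add_smul_mem : ∀ ⦃p⦄, p ∈ W → ∀ ⦃s : ℝ⦄, 0 ≤ s → p + s • e ∈ W

namespace IsConeAbout

theorem smul_axis {M : Type*} [AddCommGroup M] [Module ℝ M] {e : M} {W : Set M}
    (hW : IsConeAbout e W) {a : ℝ} (ha : 0 ≤ a) : IsConeAbout (a • e) W where
  smul_mem := hW.smul_mem
  add_smul_mem p hp s hs := by
    rw [smul_smul]
    exact hW.add_smul_mem hp (mul_nonneg hs ha)

theorem preimage {M N : Type*} [AddCommGroup M] [Module ℝ M] [AddCommGroup N] [Module ℝ N]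
    {e : N} {W : Set N} (hW : IsConeAbout e W) (φ : M →ₗ[ℝ] N) {a : M} (ha : φ a = e) :
    IsConeAbout a (φ ⁻¹' W) where
  smul_mem p hp l hl := by simpa using hW.smul_mem hp hl
  add_smul_mem p hp s hs := by simpa [ha] using hW.add_smul_mem hp hs

theorem preimage_smul {M : Type*} [AddCommGroup M] [Module ℝ M] {e : M} {W : Set M}
    (hW : IsConeAbout e W) {κ : ℝ} (hκ : 0 < κ) : (κ • ·) ⁻¹' W = W := by
  ext p
  refine ⟨fun hp ↦ ?_, fun hp ↦ hW.smul_mem hp hκ⟩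
  simpa [smul_smul, hκ.ne'] using hW.smul_mem hp (inv_pos.2 hκ)

theorem exists_slope {W : Set (ℝ × ℝ)} (hW : IsConeAbout (1, 0) W) (hpos : ∀ p ∈ W, 0 ≤ p.1)
    {q : ℝ × ℝ} (hq : q ∈ W) (hq0 : 0 < q.2) :
    ∃ b, 0 ≤ b ∧ ∀ p : ℝ × ℝ, 0 < p.2 →
      (p ∈ W → b * p.2 ≤ p.1) ∧ (p ∉ W → p.1 ≤ b * p.2) := by
  let slopes : Set ℝ := (fun p : ℝ × ℝ ↦ p.1 / p.2) '' {p ∈ W | 0 < p.2}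
  have hne : slopes.Nonempty := ⟨_, q, ⟨hq, hq0⟩, rfl⟩
  have hlow : ∀ m ∈ slopes, 0 ≤ m := by
    rintro _ ⟨p, ⟨hp, hp0⟩, rfl⟩
    exact div_nonneg (hpos p hp) hp0.le
  refine ⟨sInf slopes, le_csInf hne hlow, fun p hp0 ↦ ⟨fun hp ↦ ?_, fun hp ↦ ?_⟩⟩
  · exact (le_div_iff₀ hp0).1 (csInf_le ⟨0, hlow⟩ ⟨p, ⟨hp, hp0⟩, rfl⟩)
  · contrapose! hp
    obtain ⟨_, ⟨w, ⟨hw, hw0⟩, rfl⟩, hwp⟩ := exists_lt_of_csInf_lt hne ((lt_div_iff₀ hp0).2 hp)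
    have hshift : 0 ≤ p.1 - p.2 / w.2 * w.1 := by
      rw [div_lt_div_iff₀ hw0 hp0] at hwp
      rw [sub_nonneg, div_mul_eq_mul_div, div_le_iff₀ hw0]
      linarith
    have hp_eq : p = (p.2 / w.2) • w + (p.1 - p.2 / w.2 * w.1) • (1, 0) := by
      ext <;> simp [hw0.ne']
    rw [hp_eq]
    exact hW.add_smul_mem (hW.smul_mem hw (div_pos hp0 hw0)) hshift

end IsConeAbout

end Cone

section MeridianSector

/-- The section by a half-plane bounded by the axis of half of the lense cut out by two balls of
radius `r` with centres at distance `2 * R`. For `R = 0` it is a half disc. -/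
def meridianLens (R r : ℝ) : Set (ℝ × ℝ) := {p | 0 ≤ p.1 ∧ (p.1 + R) ^ 2 + p.2 ^ 2 ≤ r ^ 2}

theorem isCompact_meridianLens (R r : ℝ) : IsCompact (meridianLens R r) := by
  have hclosed : IsClosed (meridianLens R r) :=
    (isClosed_le (f := fun _ ↦ 0) (g := Prod.fst) (by fun_prop) (by fun_prop)).inter
      (isClosed_le (f := fun p : ℝ × ℝ ↦ (p.1 + R) ^ 2 + p.2 ^ 2) (g := fun _ ↦ r ^ 2)
        (by fun_prop) (by fun_prop))
  refine isCompact_of_isClosed_isBounded hclosed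
    ((isBounded_Icc (-R - |r|, -|r|) (-R + |r|, |r|)).subset fun p hp ↦ ?_)
  have h₁ : |p.1 + R| ≤ |r| := sq_le_sq.1 (by linarith [hp.2, sq_nonneg p.2])
  have h₂ : |p.2| ≤ |r| := sq_le_sq.1 (by linarith [hp.2, sq_nonneg (p.1 + R)])
  rw [abs_le] at h₁ h₂
  exact ⟨⟨by linarith, h₂.1⟩, ⟨by linarith, h₂.2⟩⟩

theorem preimage_smul_meridianLens {κ : ℝ} (hκ : 0 < κ) :
    (κ • · : ℝ × ℝ → ℝ × ℝ) ⁻¹' meridianLens 0 κ = meridianLens 0 1 := by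
  ext p
  have hsq : (κ * p.1) ^ 2 + (κ * p.2) ^ 2 ≤ κ ^ 2 ↔ p.1 ^ 2 + p.2 ^ 2 ≤ 1 := by
    rw [mul_pow, mul_pow, ← mul_add, mul_le_iff_le_one_right (by positivity)]
  simp [meridianLens, hκ, hsq]

theorem exists_meridianLens_crossing {R r b : ℝ} (hR : 0 ≤ R) (hRr : R < r) (hb : 0 ≤ b) :
    ∃ κ > 0, ∀ p : ℝ × ℝ, 0 < p.2 →
      (b * p.2 ≤ p.1 → p ∈ meridianLens R r → p ∈ meridianLens 0 κ) ∧
      (p.1 ≤ b * p.2 → p ∈ meridianLens 0 κ → p ∈ meridianLens R r) := by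
  obtain ⟨t, ⟨ht0, -⟩, ht⟩ : ∃ t ∈ Icc 0 r, (b * t + R) ^ 2 + t ^ 2 = r ^ 2 :=
    intermediate_value_Icc (hR.trans hRr.le) (by fun_prop)
      ⟨by nlinarith, by nlinarith [mul_nonneg hb (hR.trans hRr.le)]⟩
  have ht_pos : 0 < t := ht0.lt_of_ne (by rintro rfl; nlinarith)
  refine ⟨√((b * t) ^ 2 + t ^ 2), by positivity, fun p hp ↦ ⟨fun hbp hpL ↦ ⟨hpL.1, ?_⟩,
    fun hbp hpD ↦ ⟨hpD.1, ?_⟩⟩⟩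
  · rw [Real.sq_sqrt (by positivity), add_zero]
    obtain ⟨-, hpL⟩ := hpL
    by_contra! hout
    have hlt : p.1 < b * t := by nlinarith
    have hb_pos : p.2 < t := lt_of_mul_lt_mul_left (hbp.trans_lt hlt) hb
    nlinarith [mul_nonneg hb hp.le]
  · obtain ⟨hp1, hpD⟩ := hpD
    rw [Real.sq_sqrt (by positivity), add_zero] at hpD
    have hle : p.1 ≤ b * t := by
      by_contra! hlt
      have : t < p.2 := lt_of_mul_lt_mul_left (hlt.trans_le hbp) hb
      nlinarith [mul_nonneg hb ht0]
    nlinarith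

theorem meridianMeasure_meridianLens_inter_mul_le (k : ℕ) {R r : ℝ} (hR : 0 ≤ R) (hRr : R < r)
    {W : Set (ℝ × ℝ)} (hWm : MeasurableSet W) (hW : IsConeAbout (1, 0) W)
    (hpos : ∀ p ∈ W, 0 ≤ p.1) :
    meridianMeasure k (meridianLens R r ∩ W) * meridianMeasure k (meridianLens 0 1) ≤
      meridianMeasure k (meridianLens 0 1 ∩ W) * meridianMeasure k (meridianLens R r) := by
  by_cases hempty : ∀ q ∈ W, ¬ 0 < q.2
  · have hnull : meridianMeasure k (meridianLens R r ∩ W) = 0 :=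
      measure_eq_zero_iff_ae_notMem.2
        ((ae_meridianMeasure_pos k).mono fun q hq hqW ↦ hempty q hqW.2 hq)
    simp [hnull]
  push Not at hempty
  obtain ⟨q, hq, hq0⟩ := hempty
  obtain ⟨b, hb, hbW⟩ := hW.exists_slope hpos hq hq0
  obtain ⟨κ, hκ, hcross⟩ := exists_meridianLens_crossing hR hRr hb
  have hDm := (isCompact_meridianLens 0 κ).measurableSet
  rw [← preimage_smul_meridianLens hκ, ← hW.preimage_smul hκ, ← preimage_inter,
    meridianMeasure_preimage_smul k hκ hDm, meridianMeasure_preimage_smul k hκ (hDm.inter hWm),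
    hW.preimage_smul hκ, mul_left_comm, mul_assoc]
  gcongr _ * ?_
  refine measure_inter_mul_le_of_crossing hWm ?_ ?_
  · exact (ae_meridianMeasure_pos k).mono fun p hp hpW ↦ (hcross p hp).1 ((hbW p hp).1 hpW)
  · exact (ae_meridianMeasure_pos k).mono fun p hp hpW ↦ (hcross p hp).2 ((hbW p hp).2 hpW)

end MeridianSector

section Cylinder

variable {V : Type*} [NormedAddCommGroup V] [InnerProductSpace ℝ V]

/-- The parametrisation `(h, t) ↦ h • e + t • v` of the plane spanned by `e` and `v`, used for an
axis `e` and a direction `v` orthogonal to it. -/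
noncomputable def meridian (e v : V) : ℝ × ℝ →L[ℝ] V :=
  (ContinuousLinearMap.toSpanSingleton ℝ e).coprod (ContinuousLinearMap.toSpanSingleton ℝ v)

theorem meridian_apply (e v : V) (p : ℝ × ℝ) : meridian e v p = p.1 • e + p.2 • v := by
  simp [meridian]

theorem IsConeAbout.preimage_meridian {e : V} {W : Set V} (hW : IsConeAbout e W) (v : V) :
    IsConeAbout (1, 0) (meridian e v ⁻¹' W) :=
  hW.preimage (meridian e v).toLinearMap (by simp [meridian_apply])

theorem norm_smul_add_smul_sq {e v : V} (he : ‖e‖ = 1) (hv : ‖v‖ = 1) (hev : ⟪e, v⟫ = 0)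
    (a b : ℝ) : ‖a • e + b • v‖ ^ 2 = a ^ 2 + b ^ 2 := by
  simp [norm_add_sq_real, norm_smul, he, hv, inner_smul_left, inner_smul_right, hev]

/-- The half of the lense cut out by two balls of radius `r` centred at `± R • e` that lies on the
side of `e`. For `R = 0` it is a half ball. -/
def halfLens (e : V) (R r : ℝ) : Set V := closedBall (-(R • e)) r ∩ {u | 0 ≤ ⟪u, e⟫}

theorem preimage_meridian_halfLens {e v : V} (he : ‖e‖ = 1) (hv : ‖v‖ = 1) (hev : ⟪e, v⟫ = 0)
    (R : ℝ) {r : ℝ} (hr : 0 ≤ r) : meridian e v ⁻¹' halfLens e R r = meridianLens R r := by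
  ext p
  have hinner : ⟪p.1 • e + p.2 • v, e⟫ = p.1 := by
    simp [inner_add_left, inner_smul_left, he, real_inner_comm, hev]
  have hnorm : ‖p.1 • e + p.2 • v + R • e‖ ^ 2 = (p.1 + R) ^ 2 + p.2 ^ 2 := by
    rw [← norm_smul_add_smul_sq he hv hev]
    congr 2
    module
  simp only [halfLens, meridianLens, meridian_apply, mem_preimage, mem_inter_iff,
    mem_closedBall_iff_norm, sub_neg_eq_add, mem_ofPred_eq, hinner]
  rw [← sq_le_sq₀ (norm_nonneg _) hr, hnorm, and_comm]

variable [MeasurableSpace V] [BorelSpace V]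

theorem measurableSet_halfLens (e : V) (R r : ℝ) : MeasurableSet (halfLens e R r) :=
  measurableSet_closedBall.inter (measurableSet_le (by fun_prop) (by fun_prop))

variable [FiniteDimensional ℝ V]

theorem measurePreserving_smul_add_orthogonal_s10 {e : V} (he : ‖e‖ = 1) :
    MeasurePreserving fun p : ℝ × (ℝ ∙ e)ᗮ ↦ p.1 • e + (p.2 : V) := by
  let φ : WithLp 2 (ℝ × (ℝ ∙ e)ᗮ) ≃ₗᵢ[ℝ] V :=
    (LinearIsometryEquiv.withLpProdCongr 2 (LinearIsometryEquiv.toSpanUnitSingleton e he)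
      (.refl ℝ _)).trans (ℝ ∙ e).orthogonalDecomposition.symm
  convert φ.measurePreserving.comp (WithLp.volume_preserving_toLp ℝ (ℝ ∙ e)ᗮ) using 1
  ext p
  simp [φ]

theorem volume_eq_lintegral_meridianMeasure {e : V} (he : ‖e‖ = 1) [Nontrivial (ℝ ∙ e)ᗮ]
    {S : Set V} (hS : MeasurableSet S) :
    volume S = ∫⁻ v : sphere (0 : (ℝ ∙ e)ᗮ) 1,
      meridianMeasure (Module.finrank ℝ (ℝ ∙ e)ᗮ - 1) (meridian e (v : (ℝ ∙ e)ᗮ) ⁻¹' S)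
        ∂(volume : Measure (ℝ ∙ e)ᗮ).toSphere := by
  set k := Module.finrank ℝ (ℝ ∙ e)ᗮ - 1
  have hmap := measurePreserving_smul_add_orthogonal_s10 he
  let f : ℝ × (ℝ ∙ e)ᗮ → ENNReal := fun p ↦ S.indicator 1 (p.1 • e + (p.2 : V))
  have hind : Measurable (S.indicator (1 : V → ENNReal)) := measurable_one.indicator hS
  have hf : Measurable f := hind.comp hmap.measurable
  have hslice (v : sphere (0 : (ℝ ∙ e)ᗮ) 1) :
      meridianMeasure k (meridian e (v : (ℝ ∙ e)ᗮ) ⁻¹' S) =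
        ∫⁻ h, ∫⁻ t, f (h, t • (v : (ℝ ∙ e)ᗮ)) ∂radialMeasure k := by
    have hSv := (meridian e (v : (ℝ ∙ e)ᗮ)).continuous.measurable hS
    rw [meridianMeasure, ← lintegral_indicator_one hSv,
      lintegral_prod _ (measurable_one.indicator hSv).aemeasurable]
    refine lintegral_congr fun h ↦ lintegral_congr fun t ↦ ?_
    change S.indicator 1 (meridian e (v : (ℝ ∙ e)ᗮ) (h, t)) = f (h, t • (v : (ℝ ∙ e)ᗮ))
    simp only [f, meridian_apply, Submodule.coe_smul]
  calc volume S = ∫⁻ h, ∫⁻ y, f (h, y) := by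
        rw [← lintegral_indicator_one hS, ← hmap.lintegral_comp hind, Measure.volume_eq_prod,
          lintegral_prod _ hf.aemeasurable]
    _ = ∫⁻ h, ∫⁻ v : sphere (0 : (ℝ ∙ e)ᗮ) 1, ∫⁻ t, f (h, t • (v : (ℝ ∙ e)ᗮ)) ∂radialMeasure k
          ∂(volume : Measure (ℝ ∙ e)ᗮ).toSphere :=
        lintegral_congr fun h ↦ lintegral_eq_lintegral_toSphere volume (by fun_prop)
    _ = ∫⁻ v : sphere (0 : (ℝ ∙ e)ᗮ) 1, ∫⁻ h, ∫⁻ t, f (h, t • (v : (ℝ ∙ e)ᗮ)) ∂radialMeasure k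
          ∂volume ∂(volume : Measure (ℝ ∙ e)ᗮ).toSphere := by
        refine lintegral_lintegral_swap (Measurable.aemeasurable ?_)
        exact Measurable.lintegral_prod_right' (f := fun q : (ℝ × sphere (0 : (ℝ ∙ e)ᗮ) 1) × ℝ ↦
          f (q.1.1, q.2 • (q.1.2 : (ℝ ∙ e)ᗮ))) (by fun_prop)
    _ = _ := (lintegral_congr hslice).symm

end Cylinder

section SectorComparison

variable {V : Type*} [NormedAddCommGroup V] [InnerProductSpace ℝ V]

theorem IsConeAbout.mem_of_inner_pos {e : V} (he : ‖e‖ = 1) [Subsingleton (ℝ ∙ e)ᗮ] {W : Set V}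
    (hW : IsConeAbout e W) (hpos : ∀ u ∈ W, 0 ≤ ⟪u, e⟫) {w u : V} (hw : w ∈ W)
    (hu : 0 < ⟪u, e⟫) : u ∈ W := by
  have haxis (z : V) : z = ⟪z, e⟫ • e := by
    have hmem : z - ⟪z, e⟫ • e ∈ (ℝ ∙ e)ᗮ := by
      simp [Submodule.mem_orthogonal_singleton_iff_inner_left, inner_sub_left, inner_smul_left, he]
    exact sub_eq_zero.1 (congrArg Subtype.val (Subsingleton.elim (⟨_, hmem⟩ : (ℝ ∙ e)ᗮ) 0))
  have hw0 := hpos w hw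
  have hshift : 0 ≤ ⟪u, e⟫ - ⟪u, e⟫ / (⟪w, e⟫ + 1) * ⟪w, e⟫ := by
    rw [sub_nonneg, div_mul_eq_mul_div, div_le_iff₀ (by positivity)]
    linarith
  have hu_eq : u = (⟪u, e⟫ / (⟪w, e⟫ + 1)) • w +
      (⟪u, e⟫ - ⟪u, e⟫ / (⟪w, e⟫ + 1) * ⟪w, e⟫) • e := by
    conv_lhs => rw [haxis u]
    conv_rhs => enter [1, 2]; rw [haxis w]
    module
  rw [hu_eq]
  exact hW.add_smul_mem (hW.smul_mem hw (by positivity)) hshift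

variable [FiniteDimensional ℝ V] [MeasurableSpace V] [BorelSpace V]

theorem volume_halfLens_inter_mul_le_of_nontrivial {e : V} (he : ‖e‖ = 1) [Nontrivial (ℝ ∙ e)ᗮ]
    {R r : ℝ} (hR : 0 ≤ R) (hRr : R < r) {W : Set V} (hWm : MeasurableSet W)
    (hW : IsConeAbout e W) (hpos : ∀ u ∈ W, 0 ≤ ⟪u, e⟫) :
    volume (halfLens e R r ∩ W) * volume (halfLens e 0 1) ≤
      volume (halfLens e 0 1 ∩ W) * volume (halfLens e R r) := by
  set m := meridianMeasure (Module.finrank ℝ (ℝ ∙ e)ᗮ - 1)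
  set σ := (volume : Measure (ℝ ∙ e)ᗮ).toSphere
  have horth (v : sphere (0 : (ℝ ∙ e)ᗮ) 1) : ⟪e, (v : (ℝ ∙ e)ᗮ)⟫ = 0 :=
    Submodule.mem_orthogonal_singleton_iff_inner_right.1 (v : (ℝ ∙ e)ᗮ).2
  have hfiber (v : sphere (0 : (ℝ ∙ e)ᗮ) 1) (R : ℝ) {r : ℝ} (hr : 0 ≤ r) :
      meridian e (v : (ℝ ∙ e)ᗮ) ⁻¹' halfLens e R r = meridianLens R r :=
    preimage_meridian_halfLens he (norm_eq_of_mem_sphere v) (horth v) R hr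
  have hvol (R : ℝ) {r : ℝ} (hr : 0 ≤ r) :
      volume (halfLens e R r) = m (meridianLens R r) * σ univ := by
    rw [volume_eq_lintegral_meridianMeasure he (measurableSet_halfLens e R r)]
    simp only [hfiber _ R hr, lintegral_const, m, σ]
  have hvolW (R : ℝ) {r : ℝ} (hr : 0 ≤ r) : volume (halfLens e R r ∩ W) =
      ∫⁻ v, m (meridianLens R r ∩ meridian e (v : (ℝ ∙ e)ᗮ) ⁻¹' W) ∂σ := by
    rw [volume_eq_lintegral_meridianMeasure he ((measurableSet_halfLens e R r).inter hWm)]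
    simp only [preimage_inter, hfiber _ R hr, m, σ]
  have hfin (R r : ℝ) : m (meridianLens R r) ≠ ⊤ := (isCompact_meridianLens R r).measure_lt_top.ne
  have hr := hR.trans hRr.le
  rw [hvol 0 zero_le_one, hvol R hr, hvolW 0 zero_le_one, hvolW R hr, ← mul_assoc, ← mul_assoc,
    ← lintegral_mul_const' _ _ (hfin _ _), ← lintegral_mul_const' _ _ (hfin _ _)]
  gcongr ?_ * _
  refine lintegral_mono fun v ↦ meridianMeasure_meridianLens_inter_mul_le _ hR hRr
    ((meridian e (v : (ℝ ∙ e)ᗮ)).continuous.measurable hWm) (hW.preimage_meridian _) fun p hp ↦ ?_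
  simpa [meridian_apply, inner_add_left, inner_smul_left, he, real_inner_comm, horth]
    using hpos _ hp

theorem volume_halfLens_inter_mul_le {e : V} (he : ‖e‖ = 1) {R r : ℝ} (hR : 0 ≤ R) (hRr : R < r)
    {W : Set V} (hWm : MeasurableSet W) (hW : IsConeAbout e W) (hpos : ∀ u ∈ W, 0 ≤ ⟪u, e⟫) :
    volume (halfLens e R r ∩ W) * volume (halfLens e 0 1) ≤
      volume (halfLens e 0 1 ∩ W) * volume (halfLens e R r) := by
  rcases subsingleton_or_nontrivial (ℝ ∙ e)ᗮ with _ | _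
  · rcases W.eq_empty_or_nonempty with rfl | ⟨w, hw⟩
    · simp
    have hfull (R r : ℝ) : (halfLens e R r ∩ W : Set V) =ᵐ[volume] halfLens e R r := by
      have he0 : e ≠ 0 := norm_ne_zero_iff.1 (he ▸ one_ne_zero)
      refine (ae_inner_ne_zero he0).mono fun u hu ↦ eq_iff_iff.2 ⟨And.left, fun hL ↦ ⟨hL, ?_⟩⟩
      exact hW.mem_of_inner_pos he hpos hw (hL.2.lt_of_ne' hu)
    rw [measure_congr (hfull R r), measure_congr (hfull 0 1), mul_comm]
  · exact volume_halfLens_inter_mul_le_of_nontrivial he hR hRr hWm hW hpos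

end SectorComparison

section Lense

/-- The intersection of the two balls of radius `r` centred at `c` and `-c`; for `‖c‖ ≤ r` it has
inradius `r - ‖c‖`. -/
def lense {G : Type*} [SeminormedAddCommGroup G] (c : G) (r : ℝ) : Set G :=
  closedBall c r ∩ closedBall (-c) r

theorem neg_lense {G : Type*} [SeminormedAddCommGroup G] (c : G) (r : ℝ) :
    -lense c r = lense c r := by
  simp [lense, inter_comm]

theorem lense_neg {G : Type*} [SeminormedAddCommGroup G] (c : G) (r : ℝ) :
    lense (-c) r = lense c r := by
  simp [lense, inter_comm]

variable {V : Type*} [NormedAddCommGroup V] [InnerProductSpace ℝ V]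

theorem lense_inter_halfSpace (e : V) {R : ℝ} (hR : 0 ≤ R) (r : ℝ) :
    lense (R • e) r ∩ {u | 0 ≤ ⟪u, e⟫} = halfLens e R r := by
  ext u
  refine ⟨fun hu ↦ ⟨hu.1.2, hu.2⟩, fun hu ↦ ⟨⟨?_, hu.1⟩, hu.2⟩⟩
  have hcloser : ‖u - R • e‖ ≤ ‖u + R • e‖ := by
    rw [← sq_le_sq₀ (norm_nonneg _) (norm_nonneg _), norm_sub_sq_real, norm_add_sq_real,
      inner_smul_right]
    linarith [mul_nonneg hR hu.2]
  rw [mem_closedBall_iff_norm]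
  exact hcloser.trans (by simpa only [mem_closedBall_iff_norm, sub_neg_eq_add] using hu.1)

variable [FiniteDimensional ℝ V] [MeasurableSpace V] [BorelSpace V]

theorem volume_lense_congr {x c : V} (hxc : ‖x‖ = ‖c‖) (r : ℝ) :
    volume (lense x r) = volume (lense c r) := by
  let φ : V ≃ₗᵢ[ℝ] V := Submodule.reflection (ℝ ∙ (x - c))ᗮ
  have hφ : φ x = c := Submodule.reflection_sub hxc
  have hpre : φ ⁻¹' lense c r = lense x r := by
    rw [lense, ← hφ, ← map_neg, preimage_inter, φ.preimage_closedBall, φ.preimage_closedBall,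
      φ.symm_apply_apply, φ.symm_apply_apply, lense]
  rw [← hpre]
  exact φ.measurePreserving.measure_preimage
    (measurableSet_closedBall.inter measurableSet_closedBall).nullMeasurableSet

theorem two_mul_volume_halfLens {e : V} (he : e ≠ 0) {R : ℝ} (hR : 0 ≤ R) (r : ℝ) :
    2 * volume (halfLens e R r) = volume (lense (R • e) r) := by
  rw [← lense_inter_halfSpace e hR, two_mul_volume_inter_halfSpace (neg_lense _ _) he]

theorem volume_closedBall_inter_mul_le {x : V} (hx : x ≠ 0) {r : ℝ} (hxr : ‖x‖ < r) {W : Set V}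
    (hWm : MeasurableSet W) (hW : IsConeAbout (-x) W) (hneg : ∀ u ∈ W, ⟪u, x⟫ ≤ 0) :
    volume (closedBall x r ∩ W) * volume (closedBall (0 : V) 1) ≤
      volume (closedBall 0 1 ∩ W) * volume (lense x r) := by
  let e : V := ‖x‖⁻¹ • -x
  have hx0 : ‖x‖ ≠ 0 := norm_ne_zero_iff.2 hx
  have he : ‖e‖ = 1 := by simp [e, norm_smul, hx0]
  have hxe : ‖x‖ • e = -x := by simp [e, smul_smul, hx0]
  have hpos : ∀ u ∈ W, 0 ≤ ⟪u, e⟫ := fun u hu ↦ by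
    rw [inner_smul_right, inner_neg_right]
    exact mul_nonneg (by positivity) (neg_nonneg.2 (hneg u hu))
  have hinter (R r : ℝ) : closedBall (-(R • e)) r ∩ W = halfLens e R r ∩ W := by
    rw [halfLens, inter_assoc, inter_eq_right.2 (show W ⊆ {u | 0 ≤ ⟪u, e⟫} from hpos)]
  have hball : closedBall x r ∩ W = halfLens e ‖x‖ r ∩ W := by rw [← hinter, hxe, neg_neg]
  have hunit : closedBall 0 1 ∩ W = halfLens e 0 1 ∩ W := by rw [← hinter, zero_smul, neg_zero]
  have he0 : e ≠ 0 := norm_ne_zero_iff.1 (he ▸ one_ne_zero)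
  have hlense : volume (lense x r) = 2 * volume (halfLens e ‖x‖ r) := by
    rw [two_mul_volume_halfLens he0 (norm_nonneg x), hxe, lense_neg]
  have hunit_vol : volume (closedBall (0 : V) 1) = 2 * volume (halfLens e 0 1) := by
    rw [two_mul_volume_halfLens he0 le_rfl, lense, zero_smul, neg_zero, inter_self]
  rw [hball, hunit, hlense, hunit_vol, mul_left_comm, mul_left_comm _ 2]
  gcongr _ * ?_
  exact volume_halfLens_inter_mul_le he (norm_nonneg x) hxr hWm (hW.smul_axis (by positivity)) hpos

end Lense

section Cells

variable {V : Type*} [NormedAddCommGroup V] [InnerProductSpace ℝ V]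

/-- The open cone of those directions `u` for which `⟪u, ·⟫` attains its minimum over `t` at `x`
only. For points `t` of a sphere about the origin, the cells of the points of `t` partition space,
up to a null set, according to which point of `t` is farthest. -/
def minCell (t : Finset V) (x : V) : Set V := {u | ∀ y ∈ t, y ≠ x → ⟪u, x⟫ < ⟪u, y⟫}

theorem isConeAbout_minCell {t : Finset V} {x : V} (hx : ∀ y ∈ t, ‖y‖ ≤ ‖x‖) :
    IsConeAbout (-x) (minCell t x) where
  smul_mem u hu l hl y hy hyx := by
    rw [inner_smul_left, inner_smul_left]
    exact mul_lt_mul_of_pos_left (hu y hy hyx) hl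
  add_smul_mem u hu s hs y hy hyx := by
    have hle : ⟪x, y⟫ ≤ ⟪x, x⟫ :=
      calc ⟪x, y⟫ ≤ ‖x‖ * ‖y‖ := real_inner_le_norm x y
        _ ≤ ‖x‖ * ‖x‖ := by gcongr; exact hx y hy
        _ = ⟪x, x⟫ := (real_inner_self_eq_norm_mul_norm x).symm
    simp only [smul_neg, ← sub_eq_add_neg, inner_sub_left, real_inner_smul_left]
    linarith [hu y hy hyx, mul_le_mul_of_nonneg_left hle hs]

theorem inner_nonpos_of_mem_minCell {t : Finset V} (ht : (0 : V) ∈ convexHull ℝ (t : Set V))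
    {x u : V} (hu : u ∈ minCell t x) : ⟪u, x⟫ ≤ 0 := by
  have hlin : ConcaveOn ℝ (convexHull ℝ (t : Set V)) (innerSL ℝ u) :=
    (innerSL ℝ u).toLinearMap.concaveOn (convex_convexHull ℝ _)
  obtain ⟨y, hy, hy0⟩ := hlin.exists_le_of_mem_convexHull (subset_convexHull ℝ _) ht
  have hy0 : ⟪u, y⟫ ≤ 0 := by simpa using hy0
  rcases eq_or_ne y x with rfl | hyx
  · exact hy0
  · exact (hu y hy hyx).le.trans hy0

theorem pairwiseDisjoint_minCell (t : Finset V) : (t : Set V).PairwiseDisjoint (minCell t) :=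
  fun x hx y hy hxy ↦ disjoint_left.2 fun _ hux huy ↦
    lt_asymm (hux y hy hxy.symm) (huy x hx hxy)

variable [MeasurableSpace V] [BorelSpace V]

theorem measurableSet_minCell (t : Finset V) (x : V) : MeasurableSet (minCell t x) := by
  have heq : minCell t x = ⋂ y ∈ t, {u | y ≠ x → ⟪u, x⟫ < ⟪u, y⟫} := by
    ext u
    simp [minCell]
  rw [heq]
  refine Finset.measurableSet_biInter t fun y _ ↦ ?_
  by_cases hyx : y = x
  · simp [hyx]
  · simpa [hyx] using measurableSet_lt (α := ℝ) (f := (⟪·, x⟫)) (g := (⟪·, y⟫))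
      (by fun_prop) (by fun_prop)

variable [FiniteDimensional ℝ V]

theorem ae_exists_mem_minCell {t : Finset V} (ht : t.Nonempty) :
    ∀ᵐ u : V, ∃ x ∈ t, u ∈ minCell t x := by
  have hne : ∀ᵐ u : V, ∀ x ∈ t, ∀ y ∈ t, y ≠ x → ⟪u, y - x⟫ ≠ 0 :=
    (ae_ball_iff t.countable_toSet).2 fun x _ ↦ (ae_ball_iff t.countable_toSet).2 fun y _ ↦
      Filter.eventually_imp_distrib_left.2 fun hyx ↦ ae_inner_ne_zero (sub_ne_zero.2 hyx)
  filter_upwards [hne] with u hu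
  obtain ⟨x, hx, hmin⟩ := t.exists_min_image (⟪u, ·⟫) ht
  refine ⟨x, hx, fun y hy hyx ↦ (hmin y hy).lt_of_ne fun h ↦ hu x hx y hy hyx ?_⟩
  rw [inner_sub_right, h, sub_self]

theorem volume_eq_sum_inter_minCell {t : Finset V} (ht : t.Nonempty) {S : Set V}
    (hS : MeasurableSet S) : volume S = ∑ x ∈ t, volume (S ∩ minCell t x) := by
  have hcover : S =ᵐ[volume] ⋃ x ∈ t, S ∩ minCell t x := by
    filter_upwards [ae_exists_mem_minCell ht] with u hu
    have hiff : u ∈ S ↔ u ∈ ⋃ x ∈ t, S ∩ minCell t x := by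
      obtain ⟨x, hx, hux⟩ := hu
      exact ⟨fun huS ↦ mem_iUnion₂.2 ⟨x, hx, huS, hux⟩,
        fun h ↦ (iUnion₂_subset fun _ _ ↦ inter_subset_left) h⟩
    exact propext hiff
  rw [measure_congr hcover, measure_biUnion_finset]
  · exact (pairwiseDisjoint_minCell t).mono fun x ↦ inter_subset_right
  · exact fun x _ ↦ hS.inter (measurableSet_minCell t x)

theorem volume_biInter_closedBall_le_of_finset {t : Finset V} {c : V} {r : ℝ} (hcr : ‖c‖ < r)
    (htc : ∀ x ∈ t, ‖x‖ = ‖c‖) (ht : (0 : V) ∈ convexHull ℝ (t : Set V)) :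
    volume (⋂ x ∈ t, closedBall x r) ≤ volume (lense c r) := by
  have hne : t.Nonempty := Finset.coe_nonempty.1 (convexHull_nonempty_iff.1 ⟨0, ht⟩)
  rcases eq_or_ne c 0 with rfl | hc
  · obtain ⟨x, hx⟩ := hne
    obtain rfl : x = 0 := by simpa using htc x hx
    exact measure_mono (by simpa [lense] using biInter_subset_of_mem hx)
  have hK : MeasurableSet (⋂ x ∈ t, closedBall x r) :=
    Finset.measurableSet_biInter t fun x _ ↦ measurableSet_closedBall
  have hB0 : volume (closedBall (0 : V) 1) ≠ 0 := (measure_closedBall_pos _ _ one_pos).ne'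
  refine (ENNReal.mul_le_mul_iff_left hB0 measure_closedBall_lt_top.ne).1 ?_
  calc volume (⋂ x ∈ t, closedBall x r) * volume (closedBall (0 : V) 1)
      = ∑ x ∈ t, volume ((⋂ y ∈ t, closedBall y r) ∩ minCell t x) * volume (closedBall (0 : V) 1) :=
        by rw [volume_eq_sum_inter_minCell hne hK, Finset.sum_mul]
    _ ≤ ∑ x ∈ t, volume (closedBall x r ∩ minCell t x) * volume (closedBall (0 : V) 1) := by
        gcongr with x hx
        exact biInter_subset_of_mem hx
    _ ≤ ∑ x ∈ t, volume (closedBall 0 1 ∩ minCell t x) * volume (lense c r) := by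
        refine Finset.sum_le_sum fun x hx ↦ ?_
        have hx0 : x ≠ 0 := norm_ne_zero_iff.1 (htc x hx ▸ norm_ne_zero_iff.2 hc)
        have hcone : IsConeAbout (-x) (minCell t x) :=
          isConeAbout_minCell fun y hy ↦ ((htc y hy).trans (htc x hx).symm).le
        rw [← volume_lense_congr (htc x hx)]
        exact volume_closedBall_inter_mul_le hx0 ((htc x hx).trans_lt hcr)
          (measurableSet_minCell t x) hcone fun u hu ↦ inner_nonpos_of_mem_minCell ht hu
    _ = volume (lense c r) * volume (closedBall (0 : V) 1) := by
        rw [← Finset.sum_mul, ← volume_eq_sum_inter_minCell hne measurableSet_closedBall, mul_comm]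

theorem volume_biInter_closedBall_le {X : Set V} {o c : V} {r : ℝ} (hcr : ‖c‖ < r)
    (ho : o ∈ convexHull ℝ (X ∩ sphere o ‖c‖)) :
    volume (⋂ x ∈ X, closedBall x r) ≤ volume (lense c r) := by
  classical
  rw [convexHull_eq_union_convexHull_finite_subsets, mem_iUnion₂] at ho
  obtain ⟨s, hs, ho⟩ := ho
  let t : Finset V := s.image (-o + ·)
  have htc : ∀ x ∈ t, ‖x‖ = ‖c‖ := Finset.forall_mem_image.2 fun x hx ↦ by
    rw [neg_add_eq_sub, mem_sphere_iff_norm.1 (hs hx).2]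
  have ht : (0 : V) ∈ convexHull ℝ (t : Set V) := by
    rw [Finset.coe_image]
    change 0 ∈ convexHull ℝ (-o +ᵥ (s : Set V))
    rw [convexHull_vadd]
    exact ⟨o, ho, neg_add_cancel o⟩
  refine le_trans ?_ (volume_biInter_closedBall_le_of_finset hcr htc ht)
  rw [← measure_preimage_add volume o]
  refine measure_mono fun u hu ↦ mem_iInter₂.2 (Finset.forall_mem_image.2 fun x hx ↦ ?_)
  have hux : o + u ∈ closedBall x r := mem_iInter₂.1 hu x (hs hx).1
  rwa [mem_closedBall_iff_norm, show u - (-o + x) = o + u - x by abel, ← mem_closedBall_iff_norm]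

end Cells

section Circumball

variable {V : Type*} [NormedAddCommGroup V] [InnerProductSpace ℝ V] [FiniteDimensional ℝ V]

theorem exists_subset_closedBall_of_lt {Y : Set V} (hY : IsClosed Y) {o : V} {R : ℝ}
    (hYR : Y ⊆ closedBall o R) {f : V →L[ℝ] ℝ} {a : ℝ} (hfo : f o < a)
    (hfa : ∀ y ∈ Y ∩ sphere o R, a < f y) : ∃ o', ∃ R' < R, Y ⊆ closedBall o' R' := by
  let w : V := (InnerProductSpace.toDual ℝ V).symm f
  have hw (y : V) : ⟪y - o, w⟫ = f y - f o := by
    rw [real_inner_comm, InnerProductSpace.toDual_symm_apply, map_sub]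
  have hfar : Y ∩ {y | f y ≤ a} ⊆ ball o R := fun y hy ↦
    (hYR hy.1).lt_of_ne fun hyR ↦ (hfa y ⟨hy.1, hyR⟩).not_ge hy.2
  obtain ⟨R', hR', hfar⟩ := exists_lt_subset_ball
    (hY.inter (isClosed_le f.continuous continuous_const)) hfar
  obtain ⟨ε, ⟨hεR, hεa⟩, hε⟩ : ∃ ε : ℝ, (ε * ‖w‖ < R - R' ∧ ε * ‖w‖ ^ 2 < a - f o) ∧ 0 < ε := by
    have hsmall (m : ℝ) {b : ℝ} (hb : 0 < b) : ∀ᶠ ε in nhdsWithin (0 : ℝ) (Ioi 0), ε * m < b :=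
      have hlim := (continuous_mul_const m).tendsto' 0 0 (zero_mul m)
      nhdsWithin_le_nhds (hlim.eventually_lt_const hb)
    exact (((hsmall ‖w‖ (sub_pos.2 hR')).and (hsmall (‖w‖ ^ 2) (sub_pos.2 hfo))).and
      self_mem_nhdsWithin).exists
  have hshift : Y ⊆ ball (o + ε • w) R := by
    intro y hy
    rw [mem_ball_iff_norm, ← sub_sub]
    rcases le_or_gt (f y) a with hya | hya
    · calc ‖y - o - ε • w‖ ≤ ‖y - o‖ + ‖ε • w‖ := norm_sub_le _ _
        _ < R' + (R - R') := by
          gcongr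
          · exact mem_ball_iff_norm.1 (hfar ⟨hy, hya⟩)
          · simpa [norm_smul, abs_of_pos hε] using hεR
        _ = R := by ring
    · have hyR := mem_closedBall_iff_norm.1 (hYR hy)
      refine lt_of_pow_lt_pow_left₀ 2 ((norm_nonneg _).trans hyR) ?_
      calc ‖y - o - ε • w‖ ^ 2 = ‖y - o‖ ^ 2 - ε * (2 * (f y - f o) - ε * ‖w‖ ^ 2) := by
            rw [norm_sub_sq_real, inner_smul_right, hw, norm_smul, Real.norm_eq_abs, mul_pow,
              sq_abs]
            ring
        _ < ‖y - o‖ ^ 2 := sub_lt_self _ (mul_pos hε (by linarith))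
        _ ≤ R ^ 2 := by gcongr
  obtain ⟨R'', hR'', hshift⟩ := exists_lt_subset_ball hY hshift
  exact ⟨_, R'', hR'', hshift.trans ball_subset_closedBall⟩

theorem mem_convexHull_inter_sphere_of_minimal {Y : Set V} (hY : IsClosed Y) {o : V} {R : ℝ}
    (hYR : Y ⊆ closedBall o R) (hmin : ∀ o' R', Y ⊆ closedBall o' R' → R ≤ R') :
    o ∈ convexHull ℝ (Y ∩ sphere o R) := by
  by_contra ho
  have hcontact : IsCompact (Y ∩ sphere o R) := (isCompact_sphere o R).inter_left hY
  obtain ⟨f, a, hfo, hfa⟩ := geometric_hahn_banach_point_closed (convex_convexHull ℝ _)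
    (isCompact_convexHull_of_isCompact hcontact).isClosed ho
  obtain ⟨o', R', hR', hY'⟩ := exists_subset_closedBall_of_lt hY hYR hfo
    fun y hy ↦ hfa y (subset_convexHull ℝ _ hy)
  exact (hmin o' R' hY').not_gt hR'

end Circumball

section Body

theorem mem_biInter_closedBall_iff {α : Type*} [PseudoMetricSpace α] {X : Set α} {r : ℝ} {y : α} :
    y ∈ ⋂ x ∈ X, closedBall x r ↔ X ⊆ closedBall y r := by
  simp [subset_def, dist_comm]

theorem biInter_closure_closedBall {α : Type*} [PseudoMetricSpace α] (X : Set α) (r : ℝ) :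
    ⋂ x ∈ closure X, closedBall x r = ⋂ x ∈ X, closedBall x r := by
  ext y
  simp only [mem_biInter_closedBall_iff, isClosed_closedBall.closure_subset_iff]

theorem dist_add_le_of_closedBall_subset {F : Type*} [NormedAddCommGroup F] [NormedSpace ℝ F]
    {o x : F} {ρ r : ℝ} (hρ : 0 ≤ ρ) (hρr : ρ ≤ r) (h : closedBall o ρ ⊆ closedBall x r) :
    dist o x + ρ ≤ r := by
  rcases eq_or_ne o x with rfl | hne
  · simpa using hρr
  have hpos : 0 < ‖o - x‖ := norm_sub_pos_iff.2 hne
  have hfar : o + (ρ / ‖o - x‖) • (o - x) ∈ closedBall x r := h <| by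
    simp [norm_smul, abs_of_nonneg hρ, hpos.ne']
  have heq : o + (ρ / ‖o - x‖) • (o - x) - x = (1 + ρ / ‖o - x‖) • (o - x) := by module
  rw [mem_closedBall_iff_norm, heq, norm_smul, Real.norm_of_nonneg (by positivity), add_mul,
    one_mul, div_mul_cancel₀ _ hpos.ne'] at hfar
  rwa [dist_eq_norm]

variable {V : Type*} [NormedAddCommGroup V] [InnerProductSpace ℝ V] [FiniteDimensional ℝ V]
  [MeasurableSpace V] [BorelSpace V]

theorem volume_ballBody_le_lense_of_inradius_general {X : Set V} {r ρ : ℝ} (hρ : 0 < ρ)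
    (hin : IsGreatest {t : ℝ | ∃ o, closedBall o t ⊆ ⋂ x ∈ X, closedBall x r} ρ)
    {c : V} (hc : ‖c‖ = r - ρ) :
    volume (⋂ x ∈ X, closedBall x r) ≤ volume (closedBall c r ∩ closedBall (-c) r) := by
  rw [← biInter_closure_closedBall] at hin ⊢
  obtain ⟨⟨o, ho⟩, hmax⟩ := hin
  have hXo : closure X ⊆ closedBall o ‖c‖ := fun x hx ↦ by
    have hρr : ρ ≤ r := by linarith [norm_nonneg c]
    have hdist := dist_add_le_of_closedBall_subset hρ.le hρr
      (ho.trans (biInter_subset_of_mem hx))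
    rw [mem_closedBall']
    linarith
  have hmin (o' : V) (R' : ℝ) (hX : closure X ⊆ closedBall o' R') : ‖c‖ ≤ R' := by
    have hmem : r - R' ≤ ρ := hmax ⟨o', subset_iInter₂ fun x hx ↦
      closedBall_subset_closedBall' (by linarith [mem_closedBall'.1 (hX hx)])⟩
    linarith
  exact volume_biInter_closedBall_le (by linarith)
    (mem_convexHull_inter_sphere_of_minimal isClosed_closure hXo hmin)

end Body

/-- Among r-ball bodies of given inradius ρ ≤ r, the r-lense of inradius ρ has
maximal volume. -/
theorem volume_ballBody_le_lense_of_inradius (r ρ : ℝ) (hr : 0 < r) (hρ : 0 < ρ)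
    (hρr : ρ ≤ r) (K X : Set (EuclideanSpace ℝ (Fin d)))
    (hXne : X.Nonempty) (hXcpt : IsCompact X) (hK : K = ballBody r X)
    (hKne : K.Nonempty)
    (hin : IsGreatest {t : ℝ | ∃ c : EuclideanSpace ℝ (Fin d), closedBall c t ⊆ K} ρ)
    (c : EuclideanSpace ℝ (Fin d)) (hc : ‖c‖ = r - ρ) :
    volume K ≤ volume (closedBall c r ∩ closedBall (-c) r) := by
  subst hK
  exact volume_ballBody_le_lense_of_inradius_general hρ hin hc
end

section
/- Let B be a ball of radius r > 0 in ℝ^d (d > 1), and let C₁,…,C_n be r_i-ball bodies with r_i ≤ r such that B ⊆ C₁ ∪ ⋯ ∪ C_n. Then r ≤ Σ_{i=1}^n r_in(C_i ∩ B), where r_in denotes inradius. -/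
open Metric Set MeasureTheory Pointwise RealInnerProductSpace

variable {d : ℕ}

/-- The inradius of a subset of Euclidean space. -/
noncomputable def inrad (K : Set (EuclideanSpace ℝ (Fin d))) : ℝ :=
  sSup {t : ℝ | 0 ≤ t ∧ ∃ c : EuclideanSpace ℝ (Fin d), closedBall c t ⊆ K}

/-!
The volume of an intersection `K` of balls of radius `r` is at most `inradius K / r` times the
volume of one such ball; summing this over a cover of a ball gives the theorem.

Suppose that no ball of radius `ρ` contains all centers of `K`. By compactness the same holds for
finitely many of the centers, which then have circumradius `s > ρ`. Their circumcenter, say `0`,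
lies in the convex hull of the centers at distance `s` from it. Divide space into the cones of
points whose farthest such center is a given `q`. The part of `K` in this cone lies in the ball
around `q`, and the part of that ball in the cone lies in the image of the part of the ball around
`0` under the linear map that compresses the direction of `q` by the factor `1 - s / r`. Hence `K`
has at most `1 - s / r ≤ 1 - ρ / r` times the volume of a ball. As a ball of radius `ρ` containing
all centers would yield a ball of radius `r - ρ` in `K`, every `ρ < r - inradius K` is admissible.
-/

section BallDual

variable {α : Type*} [PseudoMetricSpace α]

/-- The `r`-dual of a set `X` in a metric space, i.e. the `r`-ball body generated by `X`; this is
`ballBody` without the restriction to Euclidean space. -/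
def ballDual (r : ℝ) (X : Set α) : Set α :=
  ⋂ x ∈ X, closedBall x r

/-- The inradius of a subset of a metric space; this is `inrad` without the restriction to Euclidean
space. As a supremum of reals, it is `0` when `K` contains arbitrarily large balls. -/
noncomputable def inradius (K : Set α) : ℝ :=
  sSup {t : ℝ | 0 ≤ t ∧ ∃ c : α, closedBall c t ⊆ K}

theorem inradius_nonneg (K : Set α) : 0 ≤ inradius K :=
  Real.sSup_nonneg fun _ ht => ht.1

theorem mem_ballDual {r : ℝ} {X : Set α} {y : α} : y ∈ ballDual r X ↔ ∀ x ∈ X, dist y x ≤ r :=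
  mem_iInter₂

theorem mem_ballDual_iff_subset_closedBall {r : ℝ} {X : Set α} {y : α} :
    y ∈ ballDual r X ↔ X ⊆ closedBall y r := by
  simp only [mem_ballDual, subset_def, mem_closedBall']

theorem ballDual_anti (r : ℝ) {X Y : Set α} (h : X ⊆ Y) : ballDual r Y ⊆ ballDual r X :=
  biInter_subset_biInter_left h

theorem ballDual_insert (r : ℝ) (x : α) (X : Set α) :
    ballDual r (insert x X) = closedBall x r ∩ ballDual r X :=
  biInter_insert ..

theorem ballDual_biUnion (r : ℝ) (X : Set α) (Y : α → Set α) :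
    ballDual r (⋃ x ∈ X, Y x) = ⋂ x ∈ X, ballDual r (Y x) := by
  simp only [ballDual, biInter_iUnion]

theorem ballDual_vadd {G : Type*} [AddGroup G] [AddAction G α] [IsIsometricVAdd G α] (r : ℝ) (v : G)
    (X : Set α) : ballDual r (v +ᵥ X) = v +ᵥ ballDual r X := by
  ext y
  rw [mem_vadd_set_iff_neg_vadd_mem, mem_ballDual, mem_ballDual, ← image_vadd, forall_mem_image]
  refine forall₂_congr fun x _ => ?_
  rw [← dist_vadd v (-v +ᵥ y) x, vadd_neg_vadd]

theorem isBounded_ballDual (r : ℝ) {X : Set α} (hX : X.Nonempty) :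
    Bornology.IsBounded (ballDual r X) :=
  let ⟨_, hx⟩ := hX
  isBounded_closedBall.subset (biInter_subset_of_mem hx)

theorem closedBall_subset_ballDual {r t : ℝ} {X : Set α} {c : α} (hc : c ∈ ballDual (r - t) X) :
    closedBall c t ⊆ ballDual r X :=
  subset_iInter₂ fun x hx => closedBall_subset_closedBall' <| by linarith [mem_ballDual.1 hc x hx]

theorem exists_finset_ballDual_eq_empty [ProperSpace α] [Nonempty α] {r : ℝ} {X : Set α}
    (hX : ballDual r X = ∅) :
    ∃ T : Finset α, T.Nonempty ∧ ↑T ⊆ X ∧ ballDual r (T : Set α) = ∅ := by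
  classical
  obtain ⟨x₀, hx₀⟩ : X.Nonempty := by
    by_contra! h
    simp [ballDual, h] at hX
  obtain ⟨F, hF⟩ := (isCompact_closedBall x₀ r).elim_finite_subfamily_closed
    (fun x : X => closedBall (x : α) r) (fun _ => isClosed_closedBall) <| by
      rw [← biInter_eq_iInter X fun x _ => closedBall x r]
      exact subset_eq_empty inter_subset_right hX
  refine ⟨insert x₀ (F.map (.subtype _)), Finset.insert_nonempty .., ?_, ?_⟩
  · simp [insert_subset_iff, hx₀]
  · rw [Finset.coe_insert, ballDual_insert, ← hF]
    simp [ballDual]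

end BallDual

section NormedSpace

variable {E : Type*} [NormedAddCommGroup E] [NormedSpace ℝ E] [Nontrivial E]

theorem le_inradius {K : Set E} (hK : Bornology.IsBounded K) {c : E} {t : ℝ}
    (h : closedBall c t ⊆ K) : t ≤ inradius K := by
  rcases lt_or_ge t 0 with ht | ht
  · exact ht.le.trans (inradius_nonneg K)
  refine le_csSup ⟨diam K / 2, ?_⟩ ⟨ht, c, h⟩
  rintro u ⟨hu, c', hc'⟩
  have hdiam := diam_mono hc' hK
  rw [diam_closedBall_eq c' hu] at hdiam
  linarith

theorem closedBall_subset_closedBall_iff_add_dist_le {x y : E} {s r : ℝ} (hs : 0 ≤ s) :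
    closedBall x s ⊆ closedBall y r ↔ s + dist x y ≤ r := by
  refine ⟨fun h => ?_, closedBall_subset_closedBall'⟩
  obtain ⟨u, hu, hray⟩ : ∃ u : E, ‖u‖ = s ∧ SameRay ℝ u (x - y) := by
    rcases eq_or_ne (x - y) 0 with hxy | hxy
    · obtain ⟨u, hu⟩ := exists_norm_eq E hs
      exact ⟨u, hu, hxy ▸ SameRay.zero_right u⟩
    · refine ⟨(s / ‖x - y‖) • (x - y), ?_, SameRay.sameRay_nonneg_smul_left _ (by positivity)⟩
      rw [norm_smul_of_nonneg (by positivity), div_mul_cancel₀ _ (norm_ne_zero_iff.2 hxy)]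
  have hux : u + x ∈ closedBall y r := h <| by simp [hu]
  rwa [mem_closedBall, dist_eq_norm, add_sub_assoc, hray.norm_add, hu, ← dist_eq_norm] at hux

theorem ballDual_closedBall (r : ℝ) (x : E) {s : ℝ} (hs : 0 ≤ s) :
    ballDual r (closedBall x s) = closedBall x (r - s) := by
  ext y
  rw [mem_ballDual_iff_subset_closedBall, closedBall_subset_closedBall_iff_add_dist_le hs,
    mem_closedBall', le_sub_iff_add_le']

theorem ballDual_inter_closedBall {ρ r : ℝ} (h : ρ ≤ r) (X : Set E) (b : E) :
    ballDual ρ X ∩ closedBall b r = ballDual r (insert b (⋃ x ∈ X, closedBall x (r - ρ))) := by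
  simp only [ballDual_insert, ballDual_biUnion, ballDual_closedBall r _ (sub_nonneg.2 h),
    sub_sub_cancel]
  exact inter_comm ..

end NormedSpace

section Circumcenter

open Filter Topology

theorem exists_minimal_closedBall_of_isCompact {α : Type*} [PseudoMetricSpace α] [ProperSpace α]
    {X : Set α} (hX : IsCompact X) (hne : X.Nonempty) :
    ∃ (c : α) (s : ℝ), X ⊆ closedBall c s ∧ ∀ c', ∃ x ∈ X, s ≤ dist x c' := by
  obtain ⟨x₀, hx₀⟩ := hne
  have : Nonempty α := ⟨x₀⟩
  set f : α → ℝ := fun c => sSup ((fun x => dist x c) '' X)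
  have hle {c x : α} (hx : x ∈ X) : dist x c ≤ f c :=
    le_csSup (hX.image (by fun_prop)).bddAbove (mem_image_of_mem _ hx)
  have hcont : Continuous f := hX.continuous_sSup (f := fun c x => dist x c) (by fun_prop)
  obtain ⟨c, hc⟩ := hcont.exists_forall_le <|
    tendsto_atTop_mono (fun _ => hle hx₀) (tendsto_dist_left_cocompact_atTop x₀)
  refine ⟨c, f c, fun x hx => hle hx, fun c' => ?_⟩
  obtain ⟨x, hx, hxc'⟩ := hX.exists_sSup_image_eq ⟨x₀, hx₀⟩
    (f := fun x => dist x c') (by fun_prop)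
  exact ⟨x, hx, hxc' ▸ hc c'⟩

variable {E : Type*} [NormedAddCommGroup E] [InnerProductSpace ℝ E]

-- First variation: the points of `X` far from the perturbed center `c + t • v` accumulate, as `t`
-- tends to `0`, at a point of the sphere.
theorem exists_mem_sphere_inner_nonpos_of_minimal {X : Set E} (hX : IsCompact X) {c : E} {s : ℝ}
    (hsub : X ⊆ closedBall c s) (hmin : ∀ c', ∃ x ∈ X, s ≤ dist x c') (v : E) :
    ∃ x ∈ X ∩ sphere c s, ⟪v, x - c⟫ ≤ 0 := by
  set t : ℕ → ℝ := fun n => 1 / ((n : ℝ) + 1)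
  choose x hxX hfar using fun n => hmin (c + t n • v)
  obtain ⟨a, haX, φ, hφ, hxa⟩ := hX.tendsto_subseq hxX
  have ht0 : Tendsto (t ∘ φ) atTop (𝓝 0) :=
    tendsto_one_div_add_atTop_nhds_zero_nat.comp hφ.tendsto_atTop
  have hinner (n : ℕ) : 2 * ⟪v, x n - c⟫ ≤ t n * ‖v‖ ^ 2 := by
    have hpos : 0 < t n := Nat.one_div_pos_of_nat
    have hle : ‖x n - c‖ ≤ ‖x n - c - t n • v‖ := by
      rw [sub_sub, ← dist_eq_norm, ← dist_eq_norm]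
      exact (hsub (hxX n)).trans (hfar n)
    have hsq := pow_le_pow_left₀ (norm_nonneg _) hle 2
    rw [norm_sub_sq_real (x n - c), inner_smul_right, real_inner_comm, norm_smul, mul_pow,
      Real.norm_eq_abs, sq_abs] at hsq
    refine le_of_mul_le_mul_left ?_ hpos
    linarith
  refine ⟨a, ⟨haX, (hsub haX).antisymm ?_⟩, ?_⟩
  · have hlim : Tendsto (fun n => dist (x (φ n)) (c + t (φ n) • v)) atTop
        (𝓝 (dist a (c + (0 : ℝ) • v))) :=
      hxa.dist (tendsto_const_nhds.add (ht0.smul_const v))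
    rw [zero_smul, add_zero] at hlim
    exact ge_of_tendsto' hlim fun n => hfar (φ n)
  · have hlim : 2 * ⟪v, a - c⟫ ≤ 0 * ‖v‖ ^ 2 :=
      le_of_tendsto_of_tendsto'
        ((tendsto_const_nhds.inner (hxa.sub tendsto_const_nhds)).const_mul 2)
        (ht0.mul_const _) fun n => hinner (φ n)
    linarith

theorem mem_closure_convexHull_of_forall_exists_inner_nonpos [CompleteSpace E] {P : Set E} {c : E}
    (h : ∀ v : E, ∃ p ∈ P, ⟪v, p - c⟫ ≤ 0) : c ∈ closure (convexHull ℝ P) := by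
  by_contra hc
  obtain ⟨f, u, hfc, hfP⟩ := geometric_hahn_banach_point_closed
    (convex_convexHull ℝ P).closure isClosed_closure hc
  obtain ⟨p, hp, hle⟩ := h ((InnerProductSpace.toDual ℝ E).symm f)
  rw [InnerProductSpace.toDual_symm_apply, map_sub] at hle
  linarith [hfP p (subset_closure (subset_convexHull ℝ P hp))]

theorem exists_inner_nonpos_of_zero_mem_convexHull {P : Set E} (h : (0 : E) ∈ convexHull ℝ P)
    (v : E) : ∃ p ∈ P, ⟪p, v⟫ ≤ 0 := by
  have hlin : ConcaveOn ℝ univ (innerₗ E v) := (innerₗ E v).concaveOn convex_univ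
  obtain ⟨p, hp, hle⟩ := hlin.exists_le_of_mem_convexHull (subset_univ P) h
  exact ⟨p, hp, by simpa [real_inner_comm] using hle⟩

theorem exists_subset_closedBall_mem_convexHull_inter_sphere [FiniteDimensional ℝ E] {X : Set E}
    (hX : X.Finite) (hne : X.Nonempty) :
    ∃ (c : E) (s : ℝ), X ⊆ closedBall c s ∧ c ∈ convexHull ℝ (X ∩ sphere c s) := by
  obtain ⟨c, s, hsub, hmin⟩ := exists_minimal_closedBall_of_isCompact hX.isCompact hne
  refine ⟨c, s, hsub, ?_⟩
  rw [← (hX.inter_of_left (sphere c s)).isClosed_convexHull ℝ |>.closure_eq]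
  exact mem_closure_convexHull_of_forall_exists_inner_nonpos
    (exists_mem_sphere_inner_nonpos_of_minimal hX.isCompact hsub hmin)

end Circumcenter

section Volume

open Filter Topology

variable {E : Type*} [NormedAddCommGroup E] [InnerProductSpace ℝ E]

theorem norm_le_norm_sub_of_inner_nonpos {x y : E} (h : ⟪x, y⟫ ≤ 0) : ‖x‖ ≤ ‖x - y‖ := by
  refine (sq_le_sq₀ (norm_nonneg _) (norm_nonneg _)).1 ?_
  rw [norm_sub_sq_real]
  nlinarith [sq_nonneg ‖y‖]

theorem norm_sub_smul_le_norm_sub {y q : E} (h : ⟪q, y⟫ ≤ 0) {τ : ℝ} (h0 : 0 ≤ τ) (h1 : τ ≤ 1) :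
    ‖y - τ • q‖ ≤ ‖y - q‖ := by
  have hinner : ⟪y - τ • q, (1 - τ) • q⟫ ≤ 0 := by
    rw [inner_smul_right, inner_sub_left, real_inner_comm, real_inner_smul_left,
      real_inner_self_eq_norm_sq]
    have : 0 ≤ τ * ‖q‖ ^ 2 := by positivity
    exact mul_nonpos_of_nonneg_of_nonpos (sub_nonneg.2 h1) (by linarith)
  convert norm_le_norm_sub_of_inner_nonpos hinner using 2
  module

/-- The linear map that fixes the orthogonal complement of `q` and multiplies `q` by
`1 - ‖q‖ / r`. -/
noncomputable def compression (q : E) (r : ℝ) : E →ₗ[ℝ] E :=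
  LinearMap.transvection (innerₗ E q) (-(r * ‖q‖)⁻¹ • q)

theorem compression_apply (q : E) (r : ℝ) (y : E) :
    compression q r y = y - (⟪q, y⟫ / (r * ‖q‖)) • q := by
  rw [compression, LinearMap.transvection.apply, innerₗ_apply_apply]
  module

theorem det_compression [FiniteDimensional ℝ E] (q : E) (r : ℝ) :
    (compression q r).det = 1 - ‖q‖ / r := by
  rw [compression, LinearMap.transvection.det, innerₗ_apply_apply, inner_smul_right,
    real_inner_self_eq_norm_mul_norm]
  rcases eq_or_ne ‖q‖ 0 with h | h
  · simp [h]
  · field_simp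
    ring

theorem inter_closedBall_subset_image_compression {W : Set E} {q : E} (r : ℝ)
    (hW : ∀ y ∈ W, ∀ τ : ℝ, 0 ≤ τ → y - τ • q ∈ W) (hq : ∀ y ∈ W, ⟪q, y⟫ ≤ 0) :
    W ∩ closedBall q r ⊆ compression q r '' (W ∩ closedBall 0 r) := by
  rcases eq_or_ne q 0 with rfl | hq0
  · simp [compression_apply]
  rintro y ⟨hyW, hyr⟩
  rw [mem_closedBall, dist_eq_norm] at hyr
  have hqpos : 0 < ‖q‖ := norm_pos_iff.2 hq0
  have hqy : -⟪q, y⟫ ≤ ‖q‖ * (r - ‖q‖) := by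
    have hcs : -⟪q, y - q⟫ ≤ ‖q‖ * r :=
      (neg_le_abs _).trans <| (abs_real_inner_le_norm q _).trans (by gcongr)
    rw [inner_sub_right, real_inner_self_eq_norm_mul_norm] at hcs
    linarith
  have hden : 0 ≤ ‖q‖ * (r - ‖q‖) := (neg_nonneg.2 (hq y hyW)).trans hqy
  have hrpos : 0 < r := by nlinarith
  -- `τ` is chosen such that the compression maps `y - τ • q` to `y`.
  obtain ⟨τ, hτ0, hτ1, hτ⟩ : ∃ τ : ℝ, 0 ≤ τ ∧ τ ≤ 1 ∧ τ * (‖q‖ * (r - ‖q‖)) = -⟪q, y⟫ :=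
    ⟨-⟪q, y⟫ / (‖q‖ * (r - ‖q‖)), div_nonneg (neg_nonneg.2 (hq y hyW)) hden,
      div_le_one_of_le₀ hqy hden,
      div_mul_cancel_of_imp fun h => (hqy.trans_eq h).antisymm (neg_nonneg.2 (hq y hyW))⟩
  refine ⟨y - τ • q, ⟨hW y hyW τ hτ0, ?_⟩, ?_⟩
  · rw [mem_closedBall_zero_iff]
    exact (norm_sub_smul_le_norm_sub (hq y hyW) hτ0 hτ1).trans hyr
  · have hinner : ⟪q, y - τ • q⟫ = -τ * (r * ‖q‖) := by
      rw [inner_sub_right, inner_smul_right, real_inner_self_eq_norm_mul_norm]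
      linarith
    rw [compression_apply, hinner, mul_div_cancel_right₀ _ (by positivity), neg_smul,
      sub_neg_eq_add, sub_add_cancel]

/-- The points at which `⟪·, y⟫` is minimal over `Q` at `q`. When `Q` lies on a sphere centered at
`0`, it consists of the points whose farthest point in `Q` is `q`. -/
def farthestCone (Q : Finset E) (q : E) : Set E :=
  {y | ∀ p ∈ Q, ⟪q, y⟫ ≤ ⟪p, y⟫}

theorem inner_nonpos_of_mem_farthestCone {Q : Finset E} (hQ : (0 : E) ∈ convexHull ℝ (Q : Set E))
    {q y : E} (hy : y ∈ farthestCone Q q) : ⟪q, y⟫ ≤ 0 :=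
  let ⟨p, hp, hpy⟩ := exists_inner_nonpos_of_zero_mem_convexHull hQ y
  (hy p hp).trans hpy

theorem sub_smul_mem_farthestCone {Q : Finset E} {q : E} (hQ : ∀ p ∈ Q, ‖p‖ ≤ ‖q‖) {y : E}
    (hy : y ∈ farthestCone Q q) {τ : ℝ} (hτ : 0 ≤ τ) : y - τ • q ∈ farthestCone Q q := by
  intro p hp
  have hpq : ⟪p, q⟫ ≤ ⟪q, q⟫ :=
    (real_inner_le_norm p q).trans <| by
      rw [real_inner_self_eq_norm_mul_norm]
      exact mul_le_mul_of_nonneg_right (hQ p hp) (norm_nonneg q)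
  rw [inner_sub_right, inner_sub_right, inner_smul_right, inner_smul_right]
  exact sub_le_sub (hy p hp) (mul_le_mul_of_nonneg_left hpq hτ)

theorem exists_mem_farthestCone {Q : Finset E} (hQ : Q.Nonempty) (y : E) :
    ∃ q ∈ Q, y ∈ farthestCone Q q :=
  Q.exists_min_image (fun q => ⟪q, y⟫) hQ

theorem isClosed_farthestCone (Q : Finset E) (q : E) : IsClosed (farthestCone Q q) := by
  simp only [farthestCone, ofPred_forall]
  exact isClosed_biInter fun p _ => isClosed_le (by fun_prop) (by fun_prop)

variable [FiniteDimensional ℝ E] [MeasurableSpace E] [BorelSpace E] (μ : Measure E)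
  [μ.IsAddHaarMeasure]

theorem aedisjoint_farthestCone {Q : Finset E} {p q : E} (hp : p ∈ Q) (hq : q ∈ Q) (hpq : p ≠ q) :
    AEDisjoint μ (farthestCone Q p) (farthestCone Q q) := by
  refine measure_mono_null ?_ <|
    Measure.addHaar_submodule μ (innerₗ E (p - q)).ker fun h => hpq ?_
  · rintro y ⟨hyp, hyq⟩
    rw [SetLike.mem_coe, LinearMap.mem_ker, innerₗ_apply_apply, inner_sub_left]
    exact sub_eq_zero.2 ((hyp q hq).antisymm (hyq p hp))
  · have : p - q ∈ (innerₗ E (p - q)).ker := h ▸ Submodule.mem_top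
    rwa [LinearMap.mem_ker, innerₗ_apply_apply, inner_self_eq_zero, sub_eq_zero] at this

theorem addHaar_inter_closedBall_le {W : Set E} {q : E} (r : ℝ)
    (hW : ∀ y ∈ W, ∀ τ : ℝ, 0 ≤ τ → y - τ • q ∈ W) (hq : ∀ y ∈ W, ⟪q, y⟫ ≤ 0) :
    μ (W ∩ closedBall q r) ≤ ENNReal.ofReal (1 - ‖q‖ / r) * μ (W ∩ closedBall 0 r) := by
  rcases (W ∩ closedBall q r).eq_empty_or_nonempty with hempty | ⟨y, hyW, hyr⟩
  · simp [hempty]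
  have hqr : ‖q‖ ≤ r :=
    (norm_le_norm_sub_of_inner_nonpos (hq y hyW)).trans <| by rwa [← dist_eq_norm, dist_comm]
  have hdet : 0 ≤ 1 - ‖q‖ / r :=
    sub_nonneg.2 (div_le_one_of_le₀ hqr ((norm_nonneg q).trans hqr))
  refine (measure_mono (inter_closedBall_subset_image_compression r hW hq)).trans_eq ?_
  rw [Measure.addHaar_image_linearMap, det_compression, abs_of_nonneg hdet]

theorem addHaar_ballDual_le_of_zero_mem_convexHull {Q : Finset E} {s : ℝ} (r : ℝ)
    (hQs : (Q : Set E) ⊆ sphere 0 s) (hQ : (0 : E) ∈ convexHull ℝ (Q : Set E)) :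
    μ (ballDual r (Q : Set E)) ≤ ENNReal.ofReal (1 - s / r) * μ (closedBall 0 r) := by
  have hnorm {q : E} (hq : q ∈ Q) : ‖q‖ = s := mem_sphere_zero_iff_norm.1 (hQs hq)
  have hQne : Q.Nonempty := Finset.coe_nonempty.1 (convexHull_nonempty_iff.1 ⟨0, hQ⟩)
  have hcover : ballDual r (Q : Set E) ⊆ ⋃ q ∈ Q, farthestCone Q q ∩ closedBall q r := by
    intro y hy
    obtain ⟨q, hq, hyq⟩ := exists_mem_farthestCone hQne y
    exact mem_biUnion hq ⟨hyq, mem_ballDual.1 hy q hq⟩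
  have hcone : ∀ q ∈ Q, μ (farthestCone Q q ∩ closedBall q r) ≤
      ENNReal.ofReal (1 - s / r) * μ (farthestCone Q q ∩ closedBall 0 r) := by
    intro q hq
    rw [← hnorm hq]
    exact addHaar_inter_closedBall_le μ r
      (fun y hy τ => sub_smul_mem_farthestCone (fun p hp => (hnorm hp).trans_le (hnorm hq).ge) hy)
      fun y => inner_nonpos_of_mem_farthestCone hQ
  have hsum : ∑ q ∈ Q, μ (farthestCone Q q ∩ closedBall 0 r) ≤ μ (closedBall 0 r) := by
    rw [← measure_biUnion_finset₀]
    · exact measure_mono (iUnion₂_subset fun _ _ => inter_subset_right)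
    · exact fun p hp q hq hpq =>
        (aedisjoint_farthestCone μ hp hq hpq).mono inter_subset_left inter_subset_left
    · exact fun q _ => ((isClosed_farthestCone Q q).inter isClosed_closedBall).nullMeasurableSet
  calc μ (ballDual r (Q : Set E))
    _ ≤ ∑ q ∈ Q, μ (farthestCone Q q ∩ closedBall q r) :=
      (measure_mono hcover).trans (measure_biUnion_finset_le _ _)
    _ ≤ ∑ q ∈ Q, ENNReal.ofReal (1 - s / r) * μ (farthestCone Q q ∩ closedBall 0 r) :=
      Finset.sum_le_sum hcone
    _ = ENNReal.ofReal (1 - s / r) * ∑ q ∈ Q, μ (farthestCone Q q ∩ closedBall 0 r) :=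
      (Finset.mul_sum ..).symm
    _ ≤ ENNReal.ofReal (1 - s / r) * μ (closedBall 0 r) := by gcongr

theorem addHaar_ballDual_le_of_mem_convexHull {T : Set E} (hT : T.Finite) {c : E} {s : ℝ} (r : ℝ)
    (hTs : T ⊆ sphere c s) (hc : c ∈ convexHull ℝ T) :
    μ (ballDual r T) ≤ ENNReal.ofReal (1 - s / r) * μ (closedBall 0 r) := by
  rw [← measure_vadd μ (-c), ← ballDual_vadd, ← hT.vadd_set.coe_toFinset]
  apply addHaar_ballDual_le_of_zero_mem_convexHull
  · rw [Finite.coe_toFinset, ← neg_add_cancel c, ← vadd_eq_add, ← vadd_sphere]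
    exact vadd_set_mono hTs
  · rw [Finite.coe_toFinset, convexHull_vadd, ← neg_add_cancel c, ← vadd_eq_add]
    exact vadd_mem_vadd_set hc

theorem addHaar_ballDual_le_of_ballDual_eq_empty {r ρ : ℝ} (hr : 0 ≤ r) {X : Set E}
    (hX : ballDual ρ X = ∅) :
    μ (ballDual r X) ≤ ENNReal.ofReal (1 - ρ / r) * μ (closedBall 0 r) := by
  obtain ⟨T, hTne, hTX, hT⟩ := exists_finset_ballDual_eq_empty hX
  obtain ⟨c, s, hTs, hc⟩ :=
    exists_subset_closedBall_mem_convexHull_inter_sphere T.finite_toSet hTne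
  have hρs : ρ ≤ s := by
    by_contra! h
    have : c ∈ ballDual ρ (T : Set E) :=
      mem_ballDual_iff_subset_closedBall.2 (hTs.trans (closedBall_subset_closedBall h.le))
    simp [hT] at this
  calc μ (ballDual r X)
    _ ≤ μ (ballDual r (↑T ∩ sphere c s)) :=
      measure_mono (ballDual_anti r (inter_subset_left.trans hTX))
    _ ≤ ENNReal.ofReal (1 - s / r) * μ (closedBall 0 r) :=
      addHaar_ballDual_le_of_mem_convexHull μ (T.finite_toSet.inter_of_left _) r
        inter_subset_right hc
    _ ≤ ENNReal.ofReal (1 - ρ / r) * μ (closedBall 0 r) := by gcongr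

theorem addHaar_ballDual_le_inradius_div_mul [Nontrivial E] {r : ℝ} (hr : 0 < r) {X : Set E}
    (hX : X.Nonempty) :
    μ (ballDual r X) ≤
      ENNReal.ofReal (inradius (ballDual r X) / r) * μ (closedBall 0 r) := by
  have hbound {t : ℝ} (ht : inradius (ballDual r X) < t) :
      μ (ballDual r X) ≤ ENNReal.ofReal (t / r) * μ (closedBall 0 r) := by
    have hempty : ballDual (r - t) X = ∅ := eq_empty_of_forall_notMem fun c hc =>
      ht.not_ge (le_inradius (isBounded_ballDual r hX) (closedBall_subset_ballDual hc))
    convert addHaar_ballDual_le_of_ballDual_eq_empty μ hr.le hempty using 3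
    field_simp
    ring
  have hlim : Tendsto (fun t => ENNReal.ofReal (t / r) * μ (closedBall 0 r))
      (𝓝[>] inradius (ballDual r X))
      (𝓝 (ENNReal.ofReal (inradius (ballDual r X) / r) * μ (closedBall 0 r))) :=
    ENNReal.Tendsto.mul_const
      (ENNReal.tendsto_ofReal (tendsto_nhdsWithin_of_tendsto_nhds (tendsto_id.div_const r)))
      (.inr measure_closedBall_lt_top.ne)
  exact ge_of_tendsto hlim (eventually_mem_nhdsWithin.mono fun _ => hbound)

end Volume

theorem kadets_type_general {E : Type*} [NormedAddCommGroup E] [InnerProductSpace ℝ E]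
    [FiniteDimensional ℝ E] [Nontrivial E] {ι : Type*} [Fintype ι] {r : ℝ} (hr : 0 < r) (b : E)
    (ρ : ι → ℝ) (hρ : ∀ i, ρ i ≤ r) (X : ι → Set E)
    (hcover : closedBall b r ⊆ ⋃ i, ballDual (ρ i) (X i)) :
    r ≤ ∑ i, inradius (ballDual (ρ i) (X i) ∩ closedBall b r) := by
  borelize E
  set K : ι → Set E := fun i => ballDual (ρ i) (X i) ∩ closedBall b r with hK
  set V := volume (closedBall (0 : E) r)
  have hpiece (i : ι) : volume (K i) ≤ ENNReal.ofReal (inradius (K i) / r) * V := by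
    simp only [hK, ballDual_inter_closedBall (hρ i)]
    exact addHaar_ballDual_le_inradius_div_mul volume hr (insert_nonempty ..)
  have hvol : 1 * V ≤ ENNReal.ofReal (∑ i, inradius (K i) / r) * V := calc
    1 * V = volume (closedBall b r) := by rw [one_mul, Measure.addHaar_closedBall_center]
    _ ≤ volume (⋃ i, K i) := by
      rw [← iUnion_inter]
      exact measure_mono (subset_inter hcover subset_rfl)
    _ ≤ ∑ i, volume (K i) := measure_iUnion_fintype_le _ _
    _ ≤ ∑ i, ENNReal.ofReal (inradius (K i) / r) * V := Finset.sum_le_sum fun i _ => hpiece i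
    _ = ENNReal.ofReal (∑ i, inradius (K i) / r) * V := by
      rw [ENNReal.ofReal_sum_of_nonneg fun i _ => div_nonneg (inradius_nonneg _) hr.le,
        Finset.sum_mul]
  have hone := (ENNReal.mul_le_mul_iff_left (measure_closedBall_pos _ _ hr).ne'
    measure_closedBall_lt_top.ne).1 hvol
  rwa [ENNReal.one_le_ofReal, ← Finset.sum_div, one_le_div hr] at hone

/-- Kadets-type theorem: if a ball of radius r is covered by rᵢ-ball bodies with
rᵢ ≤ r, then the sum of the inradii of the pieces Cᵢ ∩ B is at least r. -/
theorem kadets_type (r : ℝ) (hr : 0 < r) (hd : 1 < d)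
    (b : EuclideanSpace ℝ (Fin d)) (n : ℕ)
    (rr : Fin n → ℝ) (hrr : ∀ i, 0 < rr i ∧ rr i ≤ r)
    (C : Fin n → Set (EuclideanSpace ℝ (Fin d)))
    (X : Fin n → Set (EuclideanSpace ℝ (Fin d)))
    (hX : ∀ i, (X i).Nonempty) (hC : ∀ i, C i = ballBody (rr i) (X i))
    (hCne : ∀ i, (C i).Nonempty)
    (hcover : closedBall b r ⊆ ⋃ i, C i) :
    r ≤ ∑ i, inrad (C i ∩ closedBall b r) := by
  have : NeZero d := ⟨by omega⟩
  obtain rfl : C = fun i => ballBody (rr i) (X i) := funext hC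
  exact kadets_type_general hr b rr (fun i => (hrr i).2) X hcover
end

section
/- Let r > r₀ > 0 and 0 < k < d, and let P ⊂ ℝ^d be a finite set with circumradius r₀. Then the k-th intrinsic volume of P^r satisfies V_k(P^r) ≤ V_k(L_{r, r − √((d+1)/(2d))·r₀, d}). -/
open Metric Set MeasureTheory Pointwise RealInnerProductSpace

variable {d : ℕ}

/-- Volume of the m-dimensional unit ball. -/
noncomputable def unitBallVol (m : ℕ) : ℝ :=
  (volume (closedBall (0 : EuclideanSpace ℝ (Fin m)) 1)).toReal

/-- `V` is a system of intrinsic volumes on `ℝ^d`, i.e. it satisfies the Steiner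
formula for all convex bodies. -/
def IsIntrinsicVolumes (d : ℕ)
    (V : ℕ → Set (EuclideanSpace ℝ (Fin d)) → ℝ) : Prop :=
  ∀ A : Set (EuclideanSpace ℝ (Fin d)), Convex ℝ A → IsCompact A → A.Nonempty →
    (∀ ε : ℝ, 0 < ε →
      (volume (A + ε • closedBall (0 : EuclideanSpace ℝ (Fin d)) 1)).toReal =
        ∑ i ∈ Finset.range (d + 1), unitBallVol (d - i) * V i A * ε ^ (d - i)) ∧
    V 0 A = 1

/-!
Adding `n` copies of a segment to a convex body changes its volume by a linear function of `n`,
whose slope is monotone in the body, since the smaller of two linear functions cannot grow faster.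
Iterating over segments, the volume of `A + n Z` for a zonotope `Z` is a polynomial in `n` with
coefficients monotone in `A`. The ball is a limit of zonotopes, so the coefficients of the Steiner
polynomial, hence the intrinsic volumes, are monotone as well.

By Jung's theorem, the closed convex hull of `P` contains two points at distance
`2 √((d + 1) / (2d)) r₀`. The ball body of `P` lies in the balls of radius `r` around these two
points, and their intersection is congruent to the lens.
-/

section Polynomials

open Polynomial Filter Topology Asymptotics

lemma tendsto_coeff_of_tendsto_eval {K ι : Type*} [Field K] [TopologicalSpace K]
    [IsTopologicalSemiring K] {l : Filter ι} {s : Finset K} {q : ι → K[X]} {p : K[X]}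
    (hq : ∀ i, (q i).degree < s.card) (hp : p.degree < s.card)
    (h : ∀ x ∈ s, Tendsto (fun i => (q i).eval x) l (𝓝 (p.eval x))) (j : ℕ) :
    Tendsto (fun i => (q i).coeff j) l (𝓝 (p.coeff j)) := by
  classical
  have coeff_eq (f : K[X]) (hf : f.degree < s.card) :
      f.coeff j = ∑ x ∈ s, f.eval x * (Lagrange.basis s id x).coeff j := by
    conv_lhs => rw [Lagrange.eq_interpolate (injOn_id _) hf]
    simp only [Lagrange.interpolate_apply, finsetSum_coeff, coeff_C_mul, id]
  simp only [coeff_eq _ hp, fun i => coeff_eq _ (hq i)]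
  exact tendsto_finsetSum _ fun x hx => (h x hx).mul_const _

lemma natDegree_le_of_isBigO_eval_natCast {p : ℝ[X]} {d : ℕ}
    (h : (fun n : ℕ => p.eval (n : ℝ)) =O[atTop] fun n : ℕ => (n : ℝ) ^ d) :
    p.natDegree ≤ d := by
  by_contra! hd
  have hp : p ≠ 0 := by rintro rfl; simp at hd
  have hlt : (X ^ d : ℝ[X]).degree < p.degree := by
    rwa [degree_X_pow, degree_eq_natDegree hp, Nat.cast_lt]
  have hX := (isLittleO_atTop_of_degree_lt _ _ hlt).comp_tendsto
    (tendsto_natCast_atTop_atTop (R := ℝ))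
  simp only [Function.comp_def, eval_pow, eval_X] at hX
  have hroot := (tendsto_natCast_atTop_atTop (R := ℝ)).eventually (eventually_atTop_not_isRoot p hp)
  exact isLittleO_irrefl hroot.frequently (h.trans_isLittleO hX)

end Polynomials

section Segments

variable {E : Type*} [AddCommGroup E] [Module ℝ E] {s : Set E} {u x : E}

lemma mem_add_segment_zero :
    x ∈ s + segment ℝ 0 u ↔ ∃ a ∈ s, ∃ t ∈ Icc (0 : ℝ) 1, a + t • u = x := by
  simp [mem_add, segment_eq_image]

lemma add_segment_zero_union_vadd (s : Set E) (u : E) :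
    (s + segment ℝ 0 u) ∪ (u +ᵥ (s + segment ℝ 0 u)) =
      s + segment ℝ 0 u + segment ℝ 0 u := by
  apply Subset.antisymm
  · refine union_subset (subset_add_left _ (left_mem_segment ℝ 0 u)) ?_
    rw [← singleton_vadd, vadd_eq_add, add_comm]
    exact add_subset_add_left (singleton_subset_iff.2 (right_mem_segment ℝ 0 u))
  · intro x hx
    obtain ⟨_, hy, t, ht, rfl⟩ := mem_add_segment_zero.1 hx
    obtain ⟨a, ha, σ, hσ, rfl⟩ := mem_add_segment_zero.1 hy
    rcases le_total (σ + t) 1 with hle | hle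
    · refine .inl (mem_add_segment_zero.2 ⟨a, ha, σ + t, ⟨?_, hle⟩, by module⟩)
      linarith [hσ.1, ht.1]
    · refine .inr ⟨a + (σ + t - 1) • u, ?_, by simp only [vadd_eq_add]; module⟩
      exact mem_add_segment_zero.2 ⟨a, ha, _, ⟨by linarith, by linarith [hσ.2, ht.2]⟩, rfl⟩

lemma mem_of_add_smul_mem_of_sub_smul_mem (hs : Convex ℝ s) {a b : ℝ} (ha : 0 ≤ a) (hb : 0 ≤ b)
    (hadd : x + a • u ∈ s) (hsub : x - b • u ∈ s) : x ∈ s := by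
  rcases ha.eq_or_lt with rfl | ha
  · simpa using hadd
  have hab : 0 < a + b := by positivity
  have hmem := hs hadd hsub (div_nonneg hb hab.le) (div_nonneg ha.le hab.le) (by field_simp; ring)
  convert hmem using 1
  match_scalars <;> field_simp <;> ring

lemma add_segment_zero_inter_vadd (hs : Convex ℝ s) (u : E) :
    (s + segment ℝ 0 u) ∩ (u +ᵥ (s + segment ℝ 0 u)) = u +ᵥ s := by
  apply Subset.antisymm
  · rintro _ ⟨hx, y, hy, rfl⟩
    refine vadd_mem_vadd_set ?_
    obtain ⟨a, ha, t, ht, hat⟩ := mem_add_segment_zero.1 hx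
    obtain ⟨b, hb, σ, hσ, rfl⟩ := mem_add_segment_zero.1 hy
    simp only [vadd_eq_add] at hat
    refine mem_of_add_smul_mem_of_sub_smul_mem hs (u := u) (sub_nonneg.2 ht.2) hσ.1 ?_ (by simpa)
    convert ha using 1
    rw [← eq_sub_iff_add_eq] at hat
    rw [hat]
    module
  · refine subset_inter ?_ (vadd_set_mono (subset_add_left _ (left_mem_segment ℝ 0 u)))
    rw [← singleton_vadd, vadd_eq_add, add_comm]
    exact add_subset_add_left (singleton_subset_iff.2 (right_mem_segment ℝ 0 u))

end Segments

section SegmentAffine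

variable {E : Type*} [AddCommGroup E] [Module ℝ E] [TopologicalSpace E] [IsTopologicalAddGroup E]
  [ContinuousSMul ℝ E]

/-- The segment from `0` to `u`, as a convex body. -/
def segmentBody (u : E) : ConvexBody E where
  carrier := segment ℝ 0 u
  convex' := convex_segment 0 u
  isCompact' := by
    rw [segment_eq_image]
    exact isCompact_Icc.image (by fun_prop)
  nonempty' := ⟨0, left_mem_segment ℝ 0 u⟩

@[simp]
lemma coe_segmentBody (u : E) : (segmentBody u : Set E) = segment ℝ 0 u := rfl

/-- The growth of a functional of convex bodies under Minkowski addition of the segment `[0, u]`;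
iterating it on the volume gives mixed volumes up to a constant. -/
def segmentDifference (u : E) (F : ConvexBody E → ℝ) (A : ConvexBody E) : ℝ :=
  F (A + segmentBody u) - F A

/-- Monotone functionals of convex bodies whose growth under repeated addition of a fixed
segment is constant. -/
structure IsMonotoneSegmentAffine (F : ConvexBody E → ℝ) : Prop where
  monotone : Monotone F
  segmentDifference_add_segmentBody (u : E) (A : ConvexBody E) :
    segmentDifference u F (A + segmentBody u) = segmentDifference u F A

namespace IsMonotoneSegmentAffine

variable {F : ConvexBody E → ℝ}

lemma apply_add_nsmul_segmentBody (hF : IsMonotoneSegmentAffine F) (A : ConvexBody E) (u : E)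
    (n : ℕ) : F (A + n • segmentBody u) = F A + n * segmentDifference u F A := by
  induction n generalizing A with
  | zero => simp
  | succ n ih =>
    rw [succ_nsmul', ← add_assoc, ih, hF.segmentDifference_add_segmentBody, segmentDifference]
    push_cast
    ring

-- A body containing another cannot grow more slowly, or its linear growth would be overtaken.
protected lemma segmentDifference (hF : IsMonotoneSegmentAffine F) (u : E) :
    IsMonotoneSegmentAffine (segmentDifference u F) where
  monotone A C hAC := by
    by_contra! hlt
    obtain ⟨n, hn⟩ := exists_nat_gt
      ((F C - F A) / (segmentDifference u F A - segmentDifference u F C))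
    rw [div_lt_iff₀ (sub_pos.2 hlt)] at hn
    have hle : F (A + n • segmentBody u) ≤ F (C + n • segmentBody u) :=
      hF.monotone (add_subset_add_right hAC)
    rw [hF.apply_add_nsmul_segmentBody, hF.apply_add_nsmul_segmentBody] at hle
    linarith
  segmentDifference_add_segmentBody v A := by
    have hA := hF.segmentDifference_add_segmentBody v A
    have hAu := hF.segmentDifference_add_segmentBody v (A + segmentBody u)
    simp only [segmentDifference, add_right_comm _ (segmentBody v) (segmentBody u)] at hA hAu ⊢
    linarith

end IsMonotoneSegmentAffine

/-- The measure of a convex body, as a real functional of bodies. -/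
noncomputable def bodyMeasure [MeasurableSpace E] (μ : Measure E) (A : ConvexBody E) : ℝ :=
  μ.real A

lemma isMonotoneSegmentAffine_bodyMeasure [T2Space E] [MeasurableSpace E] [BorelSpace E]
    (μ : Measure E) [μ.IsAddLeftInvariant] [IsFiniteMeasureOnCompacts μ] :
    IsMonotoneSegmentAffine (bodyMeasure μ) where
  monotone _ C hAC := measureReal_mono hAC C.isCompact.measure_ne_top
  segmentDifference_add_segmentBody u A := by
    have hAu := (A + segmentBody u).isCompact
    have hunion := measureReal_union_add_inter (μ := μ) (s := (A + segmentBody u : Set E))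
      (hAu.measurableSet.const_vadd u) hAu.measure_ne_top (hAu.vadd u).measure_ne_top
    rw [ConvexBody.coe_add, coe_segmentBody, add_segment_zero_union_vadd,
      add_segment_zero_inter_vadd A.convex,
      measureReal_def (s := u +ᵥ (A + segment ℝ 0 u : Set E)),
      measureReal_def (s := u +ᵥ (A : Set E)), measure_vadd, measure_vadd,
      ← measureReal_def, ← measureReal_def] at hunion
    simp only [segmentDifference, bodyMeasure, ConvexBody.coe_add, coe_segmentBody]
    linarith

/-- The zonotope spanned by a list of vectors: the Minkowski sum of the segments `[0, u]`. -/
noncomputable def zonotope (us : List E) : ConvexBody E :=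
  (us.map segmentBody).sum

section ZonotopePolynomial

open Polynomial

/-- The polynomial in `n` giving the value of a segment-affine functional `F` at `A + n Z`, where
`Z` is the zonotope spanned by `us`. Its coefficients are sums of iterated segment differences
of `F` at `A`. -/
noncomputable def zonotopePolynomial : List E → (ConvexBody E → ℝ) → ConvexBody E → ℝ[X]
  | [], F, A => C (F A)
  | u :: us, F, A =>
    zonotopePolynomial us F A + X * zonotopePolynomial us (segmentDifference u F) A

lemma eval_zonotopePolynomial {F : ConvexBody E → ℝ} (hF : IsMonotoneSegmentAffine F)
    (us : List E) (A : ConvexBody E) (n : ℕ) :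
    (zonotopePolynomial us F A).eval (n : ℝ) = F (A + n • zonotope us) := by
  induction us generalizing F with
  | nil => simp [zonotopePolynomial, zonotope]
  | cons u us ih =>
    have hcons : A + n • zonotope (u :: us) = A + n • zonotope us + n • segmentBody u := by
      simp only [zonotope, List.map_cons, List.sum_cons, nsmul_add]
      abel
    rw [hcons, hF.apply_add_nsmul_segmentBody, zonotopePolynomial, eval_add, eval_mul, eval_X,
      ih hF, ih (hF.segmentDifference u)]

lemma monotone_coeff_zonotopePolynomial {F : ConvexBody E → ℝ} (hF : IsMonotoneSegmentAffine F)
    (us : List E) (j : ℕ) : Monotone fun A => (zonotopePolynomial us F A).coeff j := by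
  induction us generalizing F j with
  | nil =>
    intro A C hAC
    rcases eq_or_ne j 0 with rfl | hj
    · simpa [zonotopePolynomial] using hF.monotone hAC
    · simp [zonotopePolynomial, coeff_C_of_ne_zero hj]
  | cons u us ih =>
    intro A C hAC
    cases j with
    | zero => simpa [zonotopePolynomial] using ih hF 0 hAC
    | succ j =>
      simpa [zonotopePolynomial] using
        add_le_add (ih hF (j + 1) hAC) (ih (hF.segmentDifference u) j hAC)

end ZonotopePolynomial

end SegmentAffine

section ConvexSeparation

variable {E : Type*} [NormedAddCommGroup E] [InnerProductSpace ℝ E] {s : Set E}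

lemma exists_inner_lt_forall_lt_inner [CompleteSpace E] (hs : Convex ℝ s) (hclosed : IsClosed s)
    {x : E} (hx : x ∉ s) : ∃ (v : E) (u : ℝ), ⟪v, x⟫ < u ∧ ∀ y ∈ s, u < ⟪v, y⟫ := by
  obtain ⟨f, u, hfx, hfs⟩ := geometric_hahn_banach_point_closed hs hclosed hx
  refine ⟨(InnerProductSpace.toDual ℝ E).symm f, u, ?_⟩
  simpa only [InnerProductSpace.toDual_symm_apply] using And.intro hfx hfs

lemma closedBall_zero_subset_of_forall_exists_le_inner [CompleteSpace E] (hs : Convex ℝ s)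
    (hclosed : IsClosed s) {r : ℝ} (h : ∀ x, ∃ y ∈ s, r * ‖x‖ ≤ ⟪x, y⟫) :
    closedBall 0 r ⊆ s := by
  intro z hz
  by_contra hzs
  obtain ⟨v, u, hvz, hvs⟩ := exists_inner_lt_forall_lt_inner hs hclosed hzs
  obtain ⟨y, hys, hy⟩ := h (-v)
  have hle : -⟪v, z⟫ ≤ r * ‖v‖ :=
    calc -⟪v, z⟫ ≤ ‖v‖ * ‖z‖ := (neg_le_abs _).trans (abs_real_inner_le_norm v z)
      _ ≤ ‖v‖ * r := by gcongr; exact mem_closedBall_zero_iff.1 hz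
      _ = r * ‖v‖ := mul_comm _ _
  rw [norm_neg, inner_neg_left] at hy
  linarith [hvs y hys]

lemma subset_closedBall_zero_of_forall_inner_le {r : ℝ} (hr : 0 ≤ r)
    (h : ∀ x, ∀ y ∈ s, ⟪x, y⟫ ≤ r * ‖x‖) : s ⊆ closedBall 0 r := by
  intro y hy
  rw [mem_closedBall_zero_iff]
  by_contra! hlt
  have hyy := h y y hy
  rw [real_inner_self_eq_norm_mul_norm] at hyy
  exact hlt.not_ge (le_of_mul_le_mul_right hyy (hr.trans_lt hlt))

end ConvexSeparation

section ZonotopeSupport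

variable {E : Type*} [NormedAddCommGroup E] [InnerProductSpace ℝ E]

/-- The support function of `zonotope us`. -/
noncomputable def zonotopeSupport (us : List E) (x : E) : ℝ :=
  (us.map fun u => max ⟪x, u⟫ 0).sum

lemma isGreatest_inner_image_zonotope (us : List E) (x : E) :
    IsGreatest ((⟪x, ·⟫) '' (zonotope us : Set E)) (zonotopeSupport us x) := by
  suffices IsGreatest (innerₗ E x '' (zonotope us : Set E)) (zonotopeSupport us x) from this
  induction us with
  | nil => simp [zonotope, zonotopeSupport]
  | cons u us ih =>
    have hsegment : IsGreatest (innerₗ E x '' segment ℝ 0 u) (max ⟪x, u⟫ 0) := by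
      have himage := image_segment ℝ (innerₗ E x).toAffineMap 0 u
      rw [LinearMap.coe_toAffineMap, map_zero, segment_eq_uIcc, uIcc] at himage
      rw [himage, innerₗ_apply_apply, max_comm]
      exact isGreatest_Icc ((min_le_left _ _).trans (le_max_right _ _))
    have hcons : (zonotope (u :: us) : Set E) = segment ℝ 0 u + zonotope us := by
      simp [zonotope]
    rw [hcons, image_add, zonotopeSupport, List.map_cons, List.sum_cons]
    exact hsegment.image2 (fun _ => add_left_mono) (fun _ => add_right_mono) ih

lemma zonotopeSupport_append (us vs : List E) (x : E) :
    zonotopeSupport (us ++ vs) x = zonotopeSupport us x + zonotopeSupport vs x := by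
  simp [zonotopeSupport]

lemma max_inner_smul_left {a : ℝ} (ha : 0 ≤ a) (x u : E) :
    max ⟪a • x, u⟫ 0 = a * max ⟪x, u⟫ 0 := by
  rw [real_inner_smul_left, mul_max_of_nonneg _ _ ha, mul_zero]

lemma zonotopeSupport_smul {a : ℝ} (ha : 0 ≤ a) (us : List E) (x : E) :
    zonotopeSupport us (a • x) = a * zonotopeSupport us x := by
  simp only [zonotopeSupport, max_inner_smul_left ha, List.sum_map_mul_left]

lemma zonotopeSupport_map_smul {a : ℝ} (ha : 0 ≤ a) (us : List E) (x : E) :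
    zonotopeSupport (us.map (a • ·)) x = a * zonotopeSupport us x := by
  rw [← zonotopeSupport_smul ha]
  simp [zonotopeSupport, Function.comp_def, real_inner_smul_left, real_inner_smul_right]

end ZonotopeSupport

section ZonotopeApproximation

variable {E : Type*} [NormedAddCommGroup E] [InnerProductSpace ℝ E] [FiniteDimensional ℝ E]
  [MeasurableSpace E] [BorelSpace E]

/-- The mean of `max ⟪x, u⟫ 0` over the unit ball, that is, the support function at `x` of the mean
of the segments `[0, u]`. Being rotation invariant, it is a multiple of the norm. -/
noncomputable def meanSegmentSupport (x : E) : ℝ :=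
  ⨍ u in closedBall (0 : E) 1, max ⟪x, u⟫ 0

lemma meanSegmentSupport_eq_of_norm_eq {x y : E} (h : ‖x‖ = ‖y‖) :
    meanSegmentSupport x = meanSegmentSupport y := by
  let ρ := (ℝ ∙ (x - y))ᗮ.reflection
  have hρ : ρ x = y := Submodule.reflection_sub h
  have hball : ρ ⁻¹' closedBall 0 1 = closedBall 0 1 := by simp
  rw [meanSegmentSupport, meanSegmentSupport, setAverage_eq, setAverage_eq,
    ← ρ.measurePreserving.setIntegral_preimage_emb ρ.toHomeomorph.measurableEmbedding
      (fun u => max ⟪y, u⟫ 0), hball]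
  simp only [← hρ, ρ.inner_map_map]

lemma meanSegmentSupport_smul {a : ℝ} (ha : 0 ≤ a) (x : E) :
    meanSegmentSupport (a • x) = a * meanSegmentSupport x := by
  simp only [meanSegmentSupport, setAverage_eq, max_inner_smul_left ha, integral_const_mul,
    smul_eq_mul, mul_left_comm]

lemma meanSegmentSupport_pos {x : E} (hx : x ≠ 0) : 0 < meanSegmentSupport x := by
  have hcont : Continuous fun u : E => max ⟪x, u⟫ 0 := by fun_prop
  have hopen : IsOpen (ball (0 : E) 1 ∩ {u | 0 < ⟪x, u⟫}) :=
    isOpen_ball.inter (isOpen_lt continuous_const (by fun_prop))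
  have hnonempty : (ball (0 : E) 1 ∩ {u | 0 < ⟪x, u⟫}).Nonempty := by
    refine ⟨(2 * ‖x‖)⁻¹ • x, ?_, ?_⟩
    · rw [mem_ball_zero_iff, norm_smul, norm_inv, norm_mul, norm_norm]
      field_simp
      norm_num
    · rw [mem_ofPred, real_inner_smul_right]
      have := real_inner_self_pos.2 hx
      positivity
  rw [meanSegmentSupport, setAverage_eq]
  refine smul_pos (inv_pos.2 (ENNReal.toReal_pos (measure_closedBall_pos _ _ one_pos).ne'
    measure_closedBall_lt_top.ne)) ?_
  rw [setIntegral_pos_iff_support_of_nonneg_ae (f := fun u => max ⟪x, u⟫ 0)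
    (ae_of_all _ fun u => le_max_right _ _)
    (hcont.continuousOn.integrableOn_compact (isCompact_closedBall 0 1))]
  refine (hopen.measure_pos volume hnonempty).trans_le (measure_mono ?_)
  exact fun u hu => ⟨(lt_max_of_lt_left hu.2).ne', ball_subset_closedBall hu.1⟩

lemma exists_pos_forall_meanSegmentSupport_eq [Nontrivial E] :
    ∃ c > 0, ∀ x : E, meanSegmentSupport x = c * ‖x‖ := by
  obtain ⟨e, he⟩ := exists_norm_eq E zero_le_one
  have he0 : e ≠ 0 := by rintro rfl; simp at he
  refine ⟨_, meanSegmentSupport_pos he0, fun x => ?_⟩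
  rw [mul_comm, ← meanSegmentSupport_smul (norm_nonneg x)]
  exact meanSegmentSupport_eq_of_norm_eq (by simp [norm_smul, he])

lemma exists_abs_zonotopeSupport_sub_meanSegmentSupport_lt {δ : ℝ} (hδ : 0 < δ) :
    ∃ us : List E, ∀ x, ‖x‖ ≤ 1 → |zonotopeSupport us x - meanSegmentSupport x| < δ := by
  have hK : IsCompact (closedBall (0 : E) 1) := isCompact_closedBall 0 1
  have : CompactSpace (closedBall (0 : E) 1) := isCompact_iff_compactSpace.1 hK
  let f : C(E, C(closedBall (0 : E) 1, ℝ)) :=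
    ContinuousMap.curry ⟨fun p : E × closedBall (0 : E) 1 => max ⟪(p.2 : E), p.1⟫ 0, by fun_prop⟩
  let supports : Set C(closedBall (0 : E) 1, ℝ) := {g | ∃ us, ∀ x, g x = zonotopeSupport us (x : E)}
  have hsupports : Convex ℝ supports := by
    rintro g ⟨us, hg⟩ g' ⟨vs, hg'⟩ a b ha hb _
    refine ⟨us.map (a • ·) ++ vs.map (b • ·), fun x => ?_⟩
    simp [zonotopeSupport_append, zonotopeSupport_map_smul, ha, hb, hg, hg']
  have hf : IntegrableOn f (closedBall 0 1) volume :=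
    f.continuous.continuousOn.integrableOn_compact hK
  have hmem : ⨍ u in closedBall 0 1, f u ∈ closure supports :=
    hsupports.set_average_mem_closure (measure_closedBall_pos _ _ one_pos).ne'
      hK.measure_ne_top (ae_of_all _ fun u => ⟨[u], fun x => by simp [zonotopeSupport, f]⟩) hf
  obtain ⟨g, ⟨us, hg⟩, hgf⟩ := Metric.mem_closure_iff.1 hmem δ hδ
  refine ⟨us, fun x hx => ?_⟩
  lift x to closedBall (0 : E) 1 using mem_closedBall_zero_iff.2 hx
  have hmean : (⨍ u in closedBall 0 1, f u) x = meanSegmentSupport (x : E) := by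
    rw [meanSegmentSupport, setAverage_eq, setAverage_eq, ContinuousMap.smul_apply,
      ContinuousMap.integral_apply hf]
    rfl
  rw [← hmean, ← hg, ← Real.dist_eq, dist_comm]
  exact (ContinuousMap.dist_apply_le_dist x).trans_lt hgf

lemma exists_abs_zonotopeSupport_sub_norm_le {δ : ℝ} (hδ : 0 < δ) :
    ∃ us : List E, ∀ x, |zonotopeSupport us x - ‖x‖| ≤ δ * ‖x‖ := by
  rcases subsingleton_or_nontrivial E with _ | _
  · exact ⟨[], fun x => by simp [zonotopeSupport, Subsingleton.elim x 0]⟩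
  obtain ⟨c, hc, hmean⟩ := exists_pos_forall_meanSegmentSupport_eq (E := E)
  obtain ⟨us, hus⟩ := exists_abs_zonotopeSupport_sub_meanSegmentSupport_lt (E := E) (mul_pos hc hδ)
  refine ⟨us.map (c⁻¹ • ·), fun x => ?_⟩
  rcases eq_or_ne x 0 with rfl | hx
  · simpa using zonotopeSupport_smul le_rfl (us.map (c⁻¹ • ·)) 0
  have hnorm : ‖‖x‖⁻¹ • x‖ = 1 := norm_smul_inv_norm hx
  have hunit : |zonotopeSupport us (‖x‖⁻¹ • x) - c| < c * δ := by
    simpa only [hmean, hnorm, mul_one] using hus (‖x‖⁻¹ • x) hnorm.le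
  calc |zonotopeSupport (us.map (c⁻¹ • ·)) x - ‖x‖|
      = |‖x‖ * c⁻¹ * (zonotopeSupport us (‖x‖⁻¹ • x) - c)| := by
        rw [zonotopeSupport_map_smul (by positivity), zonotopeSupport_smul (by positivity)]
        field_simp
    _ = ‖x‖ * c⁻¹ * |zonotopeSupport us (‖x‖⁻¹ • x) - c| := by
        rw [abs_mul, abs_of_pos (by positivity)]
    _ ≤ ‖x‖ * c⁻¹ * (c * δ) := by gcongr
    _ = δ * ‖x‖ := by field_simp

-- The mean of the segments in all directions is a ball, and finite means of them are zonotopes.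
lemma exists_zonotope_between_closedBall {δ : ℝ} (hδ : 0 < δ) :
    ∃ us : List E, closedBall 0 (1 - δ) ⊆ (zonotope us : Set E) ∧
      (zonotope us : Set E) ⊆ closedBall 0 (1 + δ) := by
  obtain ⟨us, hus⟩ := exists_abs_zonotopeSupport_sub_norm_le (E := E) hδ
  simp only [abs_le] at hus
  refine ⟨us, closedBall_zero_subset_of_forall_exists_le_inner (zonotope us).convex
    (zonotope us).isClosed fun x => ?_,
    subset_closedBall_zero_of_forall_inner_le (by positivity) fun x y hy => ?_⟩
  · obtain ⟨y, hy, hxy⟩ := (isGreatest_inner_image_zonotope us x).1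
    exact ⟨y, hy, by linarith [hus x]⟩
  · linarith [hus x, (isGreatest_inner_image_zonotope us x).2 (mem_image_of_mem _ hy)]

end ZonotopeApproximation

section SteinerPolynomial

open Polynomial Filter Topology Asymptotics Module

variable {E : Type*} [NormedAddCommGroup E]

lemma coe_nsmul_convexBody [NormedSpace ℝ E] (n : ℕ) (A : ConvexBody E) :
    ((n • A : ConvexBody E) : Set E) = (n : ℝ) • (A : Set E) := by
  rw [← Nat.cast_smul_eq_nsmul NNReal n A]
  rfl

section Growth

variable [NormedSpace ℝ E] [FiniteDimensional ℝ E] [MeasurableSpace E] [BorelSpace E]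
  (μ : Measure E) [μ.IsAddHaarMeasure]

lemma bodyMeasure_nsmul (n : ℕ) (A : ConvexBody E) :
    bodyMeasure μ (n • A) = (n : ℝ) ^ finrank ℝ E * bodyMeasure μ A := by
  rw [bodyMeasure, coe_nsmul_convexBody, measureReal_def, Measure.addHaar_smul, ENNReal.toReal_mul,
    ENNReal.toReal_ofReal (by positivity), abs_of_nonneg (by positivity), ← measureReal_def,
    bodyMeasure]

lemma isBigO_bodyMeasure_add_nsmul (A B : ConvexBody E) :
    (fun n : ℕ => bodyMeasure μ (A + n • B)) =O[atTop] fun n : ℕ => (n : ℝ) ^ finrank ℝ E := by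
  obtain ⟨R, hR⟩ := (A.isBounded.union B.isBounded).subset_closedBall 0
  rw [union_subset_iff] at hR
  let K : ConvexBody E := ⟨closedBall 0 R, convex_closedBall 0 R, isCompact_closedBall 0 R,
    A.nonempty.mono hR.1⟩
  have hnonneg (L : ConvexBody E) : 0 ≤ bodyMeasure μ L := measureReal_nonneg
  refine .of_bound (2 ^ finrank ℝ E * bodyMeasure μ K) ?_
  filter_upwards [eventually_ge_atTop 1] with n hn
  have hle : A + n • B ≤ (n + 1) • K := by
    rw [succ_nsmul', ← SetLike.coe_subset_coe, ConvexBody.coe_add, ConvexBody.coe_add,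
      coe_nsmul_convexBody, coe_nsmul_convexBody]
    exact add_subset_add hR.1 (smul_set_mono hR.2)
  rw [Real.norm_of_nonneg (hnonneg _), Real.norm_of_nonneg (by positivity)]
  calc bodyMeasure μ (A + n • B)
      ≤ bodyMeasure μ ((n + 1) • K) := (isMonotoneSegmentAffine_bodyMeasure μ).monotone hle
    _ = ((n : ℝ) + 1) ^ finrank ℝ E * bodyMeasure μ K := by
        rw [bodyMeasure_nsmul, Nat.cast_succ]
    _ ≤ (2 * n) ^ finrank ℝ E * bodyMeasure μ K := by
        have hn' : (1 : ℝ) ≤ n := by exact_mod_cast hn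
        gcongr
        · exact hnonneg K
        · linarith
    _ = 2 ^ finrank ℝ E * bodyMeasure μ K * (n : ℝ) ^ finrank ℝ E := by ring

lemma natDegree_zonotopePolynomial_bodyMeasure_le (us : List E) (A : ConvexBody E) :
    (zonotopePolynomial us (bodyMeasure μ) A).natDegree ≤ finrank ℝ E := by
  refine natDegree_le_of_isBigO_eval_natCast ?_
  simp only [eval_zonotopePolynomial (isMonotoneSegmentAffine_bodyMeasure μ)]
  exact isBigO_bodyMeasure_add_nsmul μ A (zonotope us)

end Growth

variable [InnerProductSpace ℝ E] [FiniteDimensional ℝ E] [MeasurableSpace E] [BorelSpace E]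

/-- `p` is the Steiner polynomial of the convex body `A`, giving the volumes of its closed
`ε`-neighbourhoods. -/
def IsSteinerPolynomial (A : ConvexBody E) (p : ℝ[X]) : Prop :=
  ∀ ε > 0, p.eval ε = volume.real ((A : Set E) + closedBall 0 ε)

namespace IsSteinerPolynomial

variable {A C : ConvexBody E} {p q : ℝ[X]}

lemma natDegree_le (hp : IsSteinerPolynomial A p) : p.natDegree ≤ finrank ℝ E := by
  let B : ConvexBody E := ⟨closedBall 0 1, convex_closedBall 0 1, isCompact_closedBall 0 1, by simp⟩
  refine natDegree_le_of_isBigO_eval_natCast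
    ((isBigO_bodyMeasure_add_nsmul volume A B).congr' ?_ EventuallyEq.rfl)
  filter_upwards [eventually_gt_atTop 0] with n hn
  rw [hp n (by positivity), bodyMeasure, ConvexBody.coe_add, coe_nsmul_convexBody]
  congr 2
  exact smul_unitClosedBall_of_nonneg n.cast_nonneg

lemma eval_zonotopePolynomial_mem_Icc (hp : IsSteinerPolynomial A p) {us : List E} {δ : ℝ}
    (hδ : δ ∈ Ioo 0 1) (hball : closedBall 0 (1 - δ) ⊆ (zonotope us : Set E))
    (hus : (zonotope us : Set E) ⊆ closedBall 0 (1 + δ)) {n : ℕ} (hn : 0 < n) :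
    (zonotopePolynomial us (bodyMeasure volume) A).eval (n : ℝ) ∈
      Icc (p.eval (n * (1 - δ))) (p.eval (n * (1 + δ))) := by
  have hn' : (0 : ℝ) < n := by exact_mod_cast hn
  have hpos : 0 < 1 - δ := sub_pos.2 hδ.2
  have hsmul {ρ : ℝ} (hρ : 0 ≤ ρ) :
      closedBall (0 : E) (n * ρ) = (n : ℝ) • closedBall (0 : E) ρ := by
    simp [smul_closedBall _ _ hρ]
  rw [eval_zonotopePolynomial (isMonotoneSegmentAffine_bodyMeasure volume),
    hp _ (mul_pos hn' hpos), hp _ (by have := hδ.1; positivity)]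
  have hcompact (ρ : ℝ) : IsCompact ((A : Set E) + closedBall 0 ρ) :=
    A.isCompact.add (isCompact_closedBall 0 ρ)
  constructor
  · refine measureReal_mono ?_ (A + n • zonotope us).isCompact.measure_ne_top
    rw [ConvexBody.coe_add, coe_nsmul_convexBody, hsmul hpos.le]
    exact add_subset_add_left (smul_set_mono hball)
  · refine measureReal_mono ?_ (hcompact _).measure_ne_top
    rw [ConvexBody.coe_add, coe_nsmul_convexBody, hsmul (by linarith [hδ.1])]
    exact add_subset_add_left (smul_set_mono hus)

lemma tendsto_coeff_zonotopePolynomial (hp : IsSteinerPolynomial A p) {us : ℝ → List E}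
    (hball : ∀ δ > 0, closedBall 0 (1 - δ) ⊆ (zonotope (us δ) : Set E))
    (hus : ∀ δ > 0, (zonotope (us δ) : Set E) ⊆ closedBall 0 (1 + δ)) (j : ℕ) :
    Tendsto (fun δ => (zonotopePolynomial (us δ) (bodyMeasure volume) A).coeff j) (𝓝[>] 0)
      (𝓝 (p.coeff j)) := by
  have hlt {f : ℝ[X]} (hf : f.natDegree ≤ finrank ℝ E) : f.degree <
      ((Finset.Icc 1 (finrank ℝ E + 1)).map Nat.castEmbedding : Finset ℝ).card := by
    rw [Finset.card_map, Nat.card_Icc, Nat.add_sub_cancel]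
    exact (degree_le_of_natDegree_le hf).trans_lt (by exact_mod_cast Nat.lt_succ_self _)
  refine tendsto_coeff_of_tendsto_eval
    (fun δ => hlt (natDegree_zonotopePolynomial_bodyMeasure_le _ (us δ) A)) (hlt hp.natDegree_le)
    (fun x hx => ?_) j
  obtain ⟨n, hn, rfl⟩ := Finset.mem_map.1 hx
  have hn0 : 0 < n := (Finset.mem_Icc.1 hn).1
  have hlim {f : ℝ → ℝ} (hf : Continuous f) (h0 : f 0 = n) :
      Tendsto (fun δ => p.eval (f δ)) (𝓝[>] 0) (𝓝 (p.eval (n : ℝ))) :=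
    h0 ▸ ((p.continuous.comp hf).tendsto 0).mono_left nhdsWithin_le_nhds
  have hev : ∀ᶠ δ : ℝ in 𝓝[>] 0, δ ∈ Ioo 0 1 := Ioo_mem_nhdsGT one_pos
  have hmem : ∀ᶠ δ : ℝ in 𝓝[>] 0, (zonotopePolynomial (us δ) (bodyMeasure volume) A).eval (n : ℝ) ∈
      Icc (p.eval (n * (1 - δ))) (p.eval (n * (1 + δ))) := hev.mono fun δ hδ =>
    hp.eval_zonotopePolynomial_mem_Icc hδ (hball δ hδ.1) (hus δ hδ.1) hn0
  exact tendsto_of_tendsto_of_tendsto_of_le_of_le' (hlim (by fun_prop) (by simp))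
    (hlim (by fun_prop) (by simp)) (hmem.mono fun _ h => h.1) (hmem.mono fun _ h => h.2)

-- The coefficients are limits of the corresponding ones for zonotopes approximating the ball.
lemma coeff_le_coeff (hp : IsSteinerPolynomial A p) (hq : IsSteinerPolynomial C q) (hAC : A ≤ C)
    (j : ℕ) : p.coeff j ≤ q.coeff j := by
  choose! us hball hus using fun (δ : ℝ) (hδ : 0 < δ) =>
    exists_zonotope_between_closedBall (E := E) hδ
  exact le_of_tendsto_of_tendsto' (hp.tendsto_coeff_zonotopePolynomial hball hus j)
    (hq.tendsto_coeff_zonotopePolynomial hball hus j) fun δ =>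
      monotone_coeff_zonotopePolynomial (isMonotoneSegmentAffine_bodyMeasure volume) (us δ) j hAC

lemma coeff_eq (hp : IsSteinerPolynomial A p) (hq : IsSteinerPolynomial A q) (j : ℕ) :
    p.coeff j = q.coeff j :=
  (hp.coeff_le_coeff hq le_rfl j).antisymm (hq.coeff_le_coeff hp le_rfl j)

lemma of_eq_vadd_image (hp : IsSteinerPolynomial A p) (v : E) (f : E ≃ₗᵢ[ℝ] E)
    (hC : (C : Set E) = v +ᵥ f '' A) : IsSteinerPolynomial C p := by
  intro ε hε
  have himage : (C : Set E) + closedBall 0 ε = v +ᵥ f '' ((A : Set E) + closedBall 0 ε) := by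
    rw [hC, image_add, f.image_closedBall, map_zero, vadd_add_assoc]
  rw [hp ε hε, himage, measureReal_def, measureReal_def, measure_vadd,
    ← f.measurePreserving.measure_preimage_emb f.toHomeomorph.measurableEmbedding
      (f '' _), preimage_image_eq _ f.injective]

end IsSteinerPolynomial

end SteinerPolynomial

section IntrinsicVolumes

open Polynomial

lemma unitBallVol_pos (m : ℕ) : 0 < unitBallVol m :=
  ENNReal.toReal_pos (measure_closedBall_pos _ _ one_pos).ne' measure_closedBall_lt_top.ne

/-- The polynomial in `ε` on the right-hand side of the Steiner formula for `A`. -/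
noncomputable def steinerPolynomial (V : ℕ → Set (EuclideanSpace ℝ (Fin d)) → ℝ)
    (A : Set (EuclideanSpace ℝ (Fin d))) : ℝ[X] :=
  ∑ i ∈ Finset.range (d + 1), C (unitBallVol (d - i) * V i A) * X ^ (d - i)

lemma coeff_steinerPolynomial (V : ℕ → Set (EuclideanSpace ℝ (Fin d)) → ℝ)
    (A : Set (EuclideanSpace ℝ (Fin d))) {k : ℕ} (hk : k ≤ d) :
    (steinerPolynomial V A).coeff (d - k) = unitBallVol (d - k) * V k A := by
  rw [steinerPolynomial, finsetSum_coeff, Finset.sum_eq_single_of_mem k (by simpa)]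
  · rw [coeff_C_mul_X_pow, if_pos rfl]
  · intro i hi hik
    rw [Finset.mem_range] at hi
    rw [coeff_C_mul_X_pow, if_neg (by lia)]

namespace IsIntrinsicVolumes

variable {V : ℕ → Set (EuclideanSpace ℝ (Fin d)) → ℝ} {A C : ConvexBody (EuclideanSpace ℝ (Fin d))}
  {k : ℕ}

lemma isSteinerPolynomial (hV : IsIntrinsicVolumes d V)
    (A : ConvexBody (EuclideanSpace ℝ (Fin d))) :
    IsSteinerPolynomial A (steinerPolynomial V A) := by
  intro ε hε
  rw [measureReal_def, ← smul_unitClosedBall_of_nonneg hε.le,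
    (hV A A.convex A.isCompact A.nonempty).1 ε hε]
  simp [steinerPolynomial, eval_finsetSum]

lemma mono (hV : IsIntrinsicVolumes d V) (hk : k ≤ d) (hAC : A ≤ C) : V k A ≤ V k C := by
  have h := (hV.isSteinerPolynomial A).coeff_le_coeff (hV.isSteinerPolynomial C) hAC (d - k)
  rw [coeff_steinerPolynomial V _ hk, coeff_steinerPolynomial V _ hk] at h
  exact le_of_mul_le_mul_left h (unitBallVol_pos _)

lemma apply_eq_of_eq_vadd_image (hV : IsIntrinsicVolumes d V) (hk : k ≤ d)
    (v : EuclideanSpace ℝ (Fin d)) (f : EuclideanSpace ℝ (Fin d) ≃ₗᵢ[ℝ] EuclideanSpace ℝ (Fin d))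
    (hAC : (C : Set (EuclideanSpace ℝ (Fin d))) = v +ᵥ f '' A) : V k C = V k A := by
  have h := ((hV.isSteinerPolynomial A).of_eq_vadd_image v f hAC).coeff_eq
    (hV.isSteinerPolynomial C) (d - k)
  rw [coeff_steinerPolynomial V _ hk, coeff_steinerPolynomial V _ hk] at h
  exact (mul_left_cancel₀ (unitBallVol_pos _).ne' h).symm

end IsIntrinsicVolumes

end IntrinsicVolumes

section Jung

open Module Filter Topology

lemma sum_mul_mul_norm_sub_sq_le {ι E : Type*} [Fintype ι] [SeminormedAddCommGroup E] {w : ι → ℝ}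
    (hw0 : ∀ i, 0 ≤ w i) (hw : ∑ i, w i = 1) {z : ι → E} {D : ℝ} (hD : ∀ i j, ‖z i - z j‖ ≤ D) :
    ∑ i, ∑ j, w i * w j * ‖z i - z j‖ ^ 2 ≤ (1 - 1 / Fintype.card ι) * D ^ 2 := by
  classical
  have hterm (i j : ι) : w i * w j * ‖z i - z j‖ ^ 2 ≤
      (w i * w j - if i = j then w i ^ 2 else 0) * D ^ 2 := by
    split_ifs with hij
    · subst hij
      simp [sq]
    · rw [sub_zero]
      have := hw0 i; have := hw0 j
      gcongr
      exact hD i j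
  have hcard : 1 / (Fintype.card ι : ℝ) ≤ ∑ i, w i ^ 2 := by
    have := sq_sum_le_card_mul_sum_sq (s := Finset.univ) (f := w)
    rw [hw, one_pow, Finset.card_univ] at this
    exact div_le_of_le_mul₀ (Nat.cast_nonneg _) (by positivity) (by rwa [mul_comm])
  calc ∑ i, ∑ j, w i * w j * ‖z i - z j‖ ^ 2
      ≤ ∑ i, ∑ j, (w i * w j - if i = j then w i ^ 2 else 0) * D ^ 2 :=
        Finset.sum_le_sum fun i _ => Finset.sum_le_sum fun j _ => hterm i j
    _ = (1 - ∑ i, w i ^ 2) * D ^ 2 := by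
        simp [← Finset.sum_mul, ← Finset.mul_sum, hw]
    _ ≤ (1 - 1 / Fintype.card ι) * D ^ 2 := by gcongr

lemma nonempty_of_isLeast_setOf_subset_closedBall {X : Type*} [PseudoMetricSpace X]
    [Nonempty X] {s : Set X} {r : ℝ} (hleast : IsLeast {ρ : ℝ | ∃ c, s ⊆ closedBall c ρ} r) :
    s.Nonempty := by
  by_contra! hs
  have hle : r ≤ r - 1 := hleast.2 ⟨Classical.arbitrary X, hs ▸ empty_subset _⟩
  linarith

variable {E : Type*} [NormedAddCommGroup E] [InnerProductSpace ℝ E]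

lemma sum_mul_mul_norm_sub_sq {ι : Type*} [Fintype ι] {w : ι → ℝ} (hw : ∑ i, w i = 1) (z : ι → E)
    (c : E) : ∑ i, ∑ j, w i * w j * ‖z i - z j‖ ^ 2 =
      2 * (∑ i, w i * ‖z i - c‖ ^ 2 - ‖∑ i, w i • z i - c‖ ^ 2) := by
  have hcenter : ∑ i, w i • z i - c = ∑ i, w i • (z i - c) := by
    simp only [smul_sub, Finset.sum_sub_distrib, ← Finset.sum_smul, hw, one_smul]
  have hexpand (i j : ι) : w i * w j * ‖z i - z j‖ ^ 2 =
      w i * ‖z i - c‖ ^ 2 * w j + w i * (w j * ‖z j - c‖ ^ 2) -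
        2 * ⟪w i • (z i - c), w j • (z j - c)⟫ := by
    rw [← sub_sub_sub_cancel_right (z i) (z j) c, norm_sub_sq_real, real_inner_smul_left,
      real_inner_smul_right]
    ring
  simp only [hexpand, Finset.sum_add_distrib, Finset.sum_sub_distrib, ← Finset.mul_sum,
    ← Finset.sum_mul, ← inner_sum, ← sum_inner, hw]
  rw [hcenter, ← real_inner_self_eq_norm_sq (∑ i, w i • (z i - c))]
  ring

lemma sub_norm_sq_le_of_mem_convexHull [FiniteDimensional ℝ E] {s : Set E} {c y : E} {a D : ℝ}
    (hy : y ∈ convexHull ℝ s) (ha : ∀ p ∈ s, a ≤ ‖p - c‖ ^ 2)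
    (hD : ∀ p ∈ s, ∀ q ∈ s, ‖p - q‖ ≤ D) :
    a - ‖y - c‖ ^ 2 ≤ finrank ℝ E / (2 * (finrank ℝ E + 1)) * D ^ 2 := by
  obtain ⟨ι, _, z, w, hzs, hz, hw0, hw, rfl⟩ := eq_pos_convex_span_of_mem_convexHull hy
  replace hzs (i : ι) : z i ∈ s := hzs (mem_range_self i)
  have : Nonempty ι := by
    by_contra hempty
    rw [not_nonempty_iff] at hempty
    simp at hw
  have hcard : (Fintype.card ι : ℝ) ≤ finrank ℝ E + 1 := by
    exact_mod_cast hz.card_le_finrank_succ.trans (by gcongr; exact Submodule.finrank_le _)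
  have hmean : a ≤ ∑ i, w i * ‖z i - c‖ ^ 2 :=
    calc a = ∑ i, w i * a := by rw [← Finset.sum_mul, hw, one_mul]
      _ ≤ _ := Finset.sum_le_sum fun i _ => mul_le_mul_of_nonneg_left (ha _ (hzs i)) (hw0 i).le
  have hpairs : 2 * (∑ i, w i * ‖z i - c‖ ^ 2 - ‖∑ i, w i • z i - c‖ ^ 2) ≤
      finrank ℝ E / (finrank ℝ E + 1) * D ^ 2 :=
    calc 2 * (∑ i, w i * ‖z i - c‖ ^ 2 - ‖∑ i, w i • z i - c‖ ^ 2)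
        = ∑ i, ∑ j, w i * w j * ‖z i - z j‖ ^ 2 := (sum_mul_mul_norm_sub_sq hw z c).symm
      _ ≤ (1 - 1 / Fintype.card ι) * D ^ 2 :=
        sum_mul_mul_norm_sub_sq_le (fun i => (hw0 i).le) hw fun i j => hD _ (hzs i) _ (hzs j)
      _ ≤ (1 - 1 / (finrank ℝ E + 1)) * D ^ 2 := by gcongr
      _ = finrank ℝ E / (finrank ℝ E + 1) * D ^ 2 := by field_simp; ring
  have hhalf : (finrank ℝ E : ℝ) / (2 * (finrank ℝ E + 1)) * D ^ 2 =
      finrank ℝ E / (finrank ℝ E + 1) * D ^ 2 / 2 := by field_simp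
  linarith

lemma exists_pos_forall_norm_sub_sq_le [CompleteSpace E] {s : Set E} {c : E} {r ε : ℝ} (hε : 0 < ε)
    (hs : s ⊆ closedBall c r) (hc : c ∉ closedConvexHull ℝ {p ∈ s | r ^ 2 - ε ≤ ‖p - c‖ ^ 2}) :
    ∃ c', ∃ η > 0, ∀ p ∈ s, ‖p - c'‖ ^ 2 ≤ r ^ 2 - η := by
  obtain ⟨v, u, hvc, hv⟩ :=
    exists_inner_lt_forall_lt_inner convex_closedConvexHull isClosed_closedConvexHull hc
  have eventually_lt {f : ℝ → ℝ} {a : ℝ} (hf : Continuous f) (h0 : f 0 < a) :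
      ∀ᶠ t in 𝓝[>] 0, f t < a :=
    (hf.continuousAt.eventually_lt_const h0).filter_mono nhdsWithin_le_nhds
  have hfar : ∀ᶠ t : ℝ in 𝓝[>] 0, t * ‖v‖ ^ 2 < u - ⟪v, c⟫ :=
    eventually_lt (by fun_prop) (by simpa using hvc)
  have hnear : ∀ᶠ t : ℝ in 𝓝[>] 0, 2 * t * (‖v‖ * r) + t ^ 2 * ‖v‖ ^ 2 < ε / 2 :=
    eventually_lt (by fun_prop) (by simpa using hε)
  obtain ⟨t, hfart, hneart, ht : 0 < t⟩ := (hfar.and (hnear.and self_mem_nhdsWithin)).exists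
  refine ⟨c + t • v, min (t * (u - ⟪v, c⟫)) (ε / 2),
    lt_min (mul_pos ht (sub_pos.2 hvc)) (half_pos hε), fun p hp => ?_⟩
  have hpr : ‖p - c‖ ≤ r := mem_closedBall_iff_norm.1 (hs hp)
  have hexpand : ‖p - (c + t • v)‖ ^ 2 = ‖p - c‖ ^ 2 - 2 * t * ⟪v, p - c⟫ + t ^ 2 * ‖v‖ ^ 2 := by
    rw [← sub_sub, norm_sub_sq_real, real_inner_smul_right, real_inner_comm, norm_smul, mul_pow,
      Real.norm_eq_abs, sq_abs]
    ring
  rw [hexpand, le_sub_comm]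
  rcases le_or_gt (r ^ 2 - ε) (‖p - c‖ ^ 2) with hpfar | hpnear
  · refine (min_le_left _ _).trans ?_
    have := hv p (subset_closedConvexHull ⟨hp, hpfar⟩)
    rw [inner_sub_right]
    nlinarith [pow_le_pow_left₀ (norm_nonneg _) hpr 2]
  · refine (min_le_right _ _).trans ?_
    have hinner : -⟪v, p - c⟫ ≤ ‖v‖ * r :=
      (neg_le_abs _).trans ((abs_real_inner_le_norm v _).trans (by gcongr))
    nlinarith

lemma mem_closedConvexHull_of_isLeast [CompleteSpace E] {s : Set E} {c : E} {r ε : ℝ} (hε : 0 < ε)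
    (hr : 0 < r) (hs : s ⊆ closedBall c r) (hleast : IsLeast {ρ : ℝ | ∃ c, s ⊆ closedBall c ρ} r) :
    c ∈ closedConvexHull ℝ {p ∈ s | r ^ 2 - ε ≤ ‖p - c‖ ^ 2} := by
  by_contra hc
  obtain ⟨c', η, hη, hc'⟩ := exists_pos_forall_norm_sub_sq_le hε hs hc
  have hle : r ≤ √(r ^ 2 - η) :=
    hleast.2 ⟨c', fun p hp => mem_closedBall_iff_norm.2 (Real.le_sqrt_of_sq_le (hc' p hp))⟩
  linarith [(Real.le_sqrt' hr).1 hle]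

/-- **Jung's theorem**. -/
theorem le_sqrt_mul_diam_of_isLeast [FiniteDimensional ℝ E] {s : Set E} {r : ℝ}
    (hleast : IsLeast {ρ : ℝ | ∃ c, s ⊆ closedBall c ρ} r) :
    r ≤ √(finrank ℝ E / (2 * (finrank ℝ E + 1))) * diam s := by
  rcases le_or_gt r 0 with hr | hr
  · exact hr.trans (by positivity)
  obtain ⟨c, hs⟩ := hleast.1
  have hdiam {p q : E} (hp : p ∈ s) (hq : q ∈ s) : ‖p - q‖ ≤ diam s := by
    rw [← dist_eq_norm]
    exact dist_le_diam_of_mem (isBounded_closedBall.subset hs) hp hq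
  suffices r ^ 2 ≤ finrank ℝ E / (2 * (finrank ℝ E + 1)) * diam s ^ 2 by
    rw [← Real.sqrt_sq diam_nonneg, ← Real.sqrt_mul (by positivity)]
    exact Real.le_sqrt_of_sq_le this
  refine le_of_forall_pos_le_add fun ε hε => ?_
  have hc := mem_closedConvexHull_of_isLeast (half_pos hε) hr hs hleast
  rw [closedConvexHull_eq_closure_convexHull] at hc
  obtain ⟨y, hy, hcy⟩ := Metric.mem_closure_iff.1 hc √(ε / 2) (by positivity)
  have hsq : ‖y - c‖ ^ 2 < ε / 2 := by
    rw [← dist_eq_norm, dist_comm]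
    exact (Real.lt_sqrt dist_nonneg).1 hcy
  linarith [sub_norm_sq_le_of_mem_convexHull hy (fun p hp => hp.2)
    fun p hp q hq => hdiam hp.1 hq.1]

lemma two_mul_sqrt_mul_le_diam_of_isLeast [FiniteDimensional ℝ E] (hE : 0 < finrank ℝ E)
    {s : Set E} {r : ℝ} (hleast : IsLeast {ρ : ℝ | ∃ c, s ⊆ closedBall c ρ} r) :
    2 * (√((finrank ℝ E + 1) / (2 * finrank ℝ E)) * r) ≤ diam s := by
  have : (0 : ℝ) < finrank ℝ E := by exact_mod_cast hE
  have hinv : √((finrank ℝ E + 1) / (2 * finrank ℝ E)) *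
      √(finrank ℝ E / (2 * (finrank ℝ E + 1))) = 1 / 2 := by
    rw [← Real.sqrt_mul (by positivity), Real.sqrt_eq_iff_mul_self_eq (by positivity) (by norm_num)]
    field_simp
  calc 2 * (√((finrank ℝ E + 1) / (2 * finrank ℝ E)) * r)
      ≤ 2 * (√((finrank ℝ E + 1) / (2 * finrank ℝ E)) *
          (√(finrank ℝ E / (2 * (finrank ℝ E + 1))) * diam s)) := by
        gcongr
        exact le_sqrt_mul_diam_of_isLeast hleast
    _ = diam s := by rw [← mul_assoc (√_), hinv]; ring

end Jung

section BallBody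

variable {r : ℝ} {P : Set (EuclideanSpace ℝ (Fin d))} {x : EuclideanSpace ℝ (Fin d)}

lemma mem_ballBody : x ∈ ballBody r P ↔ P ⊆ closedBall x r := by
  simp only [ballBody, mem_iInter₂, subset_def, mem_closedBall_comm]

lemma convex_ballBody : Convex ℝ (ballBody r P) :=
  convex_iInter₂ fun p _ => convex_closedBall p r

lemma isCompact_ballBody (hP : P.Nonempty) : IsCompact (ballBody r P) := by
  obtain ⟨p, hp⟩ := hP
  exact (isCompact_closedBall p r).of_isClosed_subset
    (isClosed_biInter fun _ _ => isClosed_closedBall) (biInter_subset_of_mem hp)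

lemma ballBody_closedConvexHull : ballBody r (closedConvexHull ℝ P) = ballBody r P := by
  ext x
  rw [mem_ballBody, mem_ballBody]
  exact ⟨subset_closedConvexHull.trans,
    fun h => closedConvexHull_min h (convex_closedBall x r) isClosed_closedBall⟩

end BallBody

section Lens

lemma exists_dist_eq_of_le_diam {X : Type*} [PseudoMetricSpace X] {K : Set X} (hK : IsCompact K)
    (hconn : IsConnected K) {ℓ : ℝ} (h0 : 0 ≤ ℓ) (hℓ : ℓ ≤ diam K) :
    ∃ a ∈ K, ∃ b ∈ K, dist a b = ℓ := by
  obtain ⟨a₀, ha₀⟩ := hconn.nonempty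
  obtain ⟨⟨a, b⟩, ⟨ha, hb⟩, hmax⟩ := (hK.prod hK).exists_isMaxOn ⟨(a₀, a₀), ha₀, ha₀⟩
    continuous_dist.continuousOn
  have hdiam : diam K ≤ dist a b :=
    diam_le_of_forall_dist_le dist_nonneg fun x hx y hy => hmax (mk_mem_prod hx hy)
  obtain ⟨c, hc, hdist⟩ := hconn.isPreconnected.intermediate_value ha hb
    (continuous_const.dist continuous_id).continuousOn (f := dist a) ⟨by simpa, hℓ.trans hdiam⟩
  exact ⟨a, ha, c, hc, hdist⟩

variable {E : Type*} [NormedAddCommGroup E] [InnerProductSpace ℝ E]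

/-- The lens `closedBall a r ∩ closedBall b r`, as a convex body. -/
def lensBody [ProperSpace E] {a b : E} {r : ℝ} (h : (closedBall a r ∩ closedBall b r).Nonempty) :
    ConvexBody E where
  carrier := closedBall a r ∩ closedBall b r
  convex' := (convex_closedBall a r).inter (convex_closedBall b r)
  isCompact' := (isCompact_closedBall a r).inter (isCompact_closedBall b r)
  nonempty' := h

lemma exists_mem_closedConvexHull_dist_eq [ProperSpace E] {s : Set E} (hs : s.Nonempty)
    (hbounded : Bornology.IsBounded s) {ℓ : ℝ} (h0 : 0 ≤ ℓ) (hℓ : ℓ ≤ diam s) :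
    ∃ a ∈ closedConvexHull ℝ s, ∃ b ∈ closedConvexHull ℝ s, dist a b = ℓ := by
  rw [closedConvexHull_eq_closure_convexHull]
  refine exists_dist_eq_of_le_diam (isBounded_convexHull.2 hbounded).isCompact_closure
    ((convex_convexHull ℝ s).closure.isConnected ?_) h0 ?_
  · exact hs.convexHull.closure
  · rwa [diam_closure, convexHull_diam]

lemma exists_closedBall_inter_closedBall_eq {a b c : E} (h : dist a b = 2 * ‖c‖) (r : ℝ) :
    ∃ (v : E) (f : E ≃ₗᵢ[ℝ] E), closedBall a r ∩ closedBall b r =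
      v +ᵥ f '' (closedBall c r ∩ closedBall (-c) r) := by
  have hnorm : ‖c‖ = ‖(2⁻¹ : ℝ) • (a - b)‖ := by
    rw [norm_smul, ← dist_eq_norm, h]
    simp
  refine ⟨midpoint ℝ a b, (ℝ ∙ (c - (2⁻¹ : ℝ) • (a - b)))ᗮ.reflection, ?_⟩
  rw [image_inter (LinearIsometryEquiv.injective _), LinearIsometryEquiv.image_closedBall,
    LinearIsometryEquiv.image_closedBall, map_neg, Submodule.reflection_sub hnorm, vadd_set_inter,
    vadd_closedBall, vadd_closedBall, midpoint_eq_smul_add, invOf_eq_inv, vadd_eq_add, vadd_eq_add]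
  congr 2 <;> module

end Lens

theorem intrinsicVolume_ballBody_le_general {r r₀ : ℝ} (hr : r₀ ≤ r) {k : ℕ} (hd : 0 < d)
    (hkd : k ≤ d) {P : Set (EuclideanSpace ℝ (Fin d))}
    (hcr : IsLeast {ρ : ℝ | ∃ cc : EuclideanSpace ℝ (Fin d), P ⊆ closedBall cc ρ} r₀)
    {V : ℕ → Set (EuclideanSpace ℝ (Fin d)) → ℝ} (hV : IsIntrinsicVolumes d V)
    {c : EuclideanSpace ℝ (Fin d)} (hc : ‖c‖ = √((d + 1) / (2 * d)) * r₀) :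
    V k (ballBody r P) ≤ V k (closedBall c r ∩ closedBall (-c) r) := by
  obtain ⟨cc, hcc⟩ := hcr.1
  have hP : P.Nonempty := nonempty_of_isLeast_setOf_subset_closedBall hcr
  have hdiam : 2 * ‖c‖ ≤ diam P := by
    simpa [hc] using two_mul_sqrt_mul_le_diam_of_isLeast (by simpa) hcr
  obtain ⟨a, ha, b, hb, hab⟩ := exists_mem_closedConvexHull_dist_eq hP
    (isBounded_closedBall.subset hcc) (by positivity) hdiam
  obtain ⟨v, f, hvf⟩ := exists_closedBall_inter_closedBall_eq hab r
  have hsub : ballBody r P ⊆ closedBall a r ∩ closedBall b r := by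
    rw [← ballBody_closedConvexHull]
    exact subset_inter (biInter_subset_of_mem ha) (biInter_subset_of_mem hb)
  have hne : (ballBody r P).Nonempty :=
    ⟨cc, mem_ballBody.2 (hcc.trans (closedBall_subset_closedBall hr))⟩
  have hL : (closedBall c r ∩ closedBall (-c) r).Nonempty := by
    simpa [hvf] using hne.mono hsub
  calc V k (ballBody r P)
      ≤ V k (closedBall a r ∩ closedBall b r) :=
        hV.mono (A := ⟨_, convex_ballBody, isCompact_ballBody hP, hne⟩)
          (C := lensBody (hne.mono hsub)) hkd hsub
    _ = V k (closedBall c r ∩ closedBall (-c) r) :=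
        hV.apply_eq_of_eq_vadd_image (A := lensBody hL)
          (C := lensBody (hne.mono hsub)) hkd v f hvf

/-- Intrinsic volume bound: V_k(P^r) ≤ V_k(L_{r, r − √((d+1)/(2d))·r₀, d}). -/
theorem intrinsicVolume_ballBody_le (r r₀ : ℝ) (hr : r₀ < r) (hr₀ : 0 < r₀)
    (k : ℕ) (hk : 0 < k) (hkd : k < d)
    (P : Set (EuclideanSpace ℝ (Fin d))) (hPfin : P.Finite) (hcard : 1 < P.ncard)
    (hcr : IsLeast {ρ : ℝ | ∃ cc : EuclideanSpace ℝ (Fin d), P ⊆ closedBall cc ρ} r₀)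
    (V : ℕ → Set (EuclideanSpace ℝ (Fin d)) → ℝ) (hV : IsIntrinsicVolumes d V)
    (c : EuclideanSpace ℝ (Fin d))
    (hc : ‖c‖ = r - (r - Real.sqrt ((d + 1) / (2 * d)) * r₀)) :
    V k (ballBody r P) ≤ V k (closedBall c r ∩ closedBall (-c) r) :=
  intrinsicVolume_ballBody_le_general hr.le (hk.trans hkd) hkd.le hcr hV
    (by rwa [sub_sub_cancel] at hc)
end
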